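/- arXiv:1504.06970 — 9 statements merged into one kernel-verified Lean document; each statement's English description precedes it below -/
import Mathlib

section
/- Let M_n denote the smallest mode of the sequence of ordered Stirling numbers, i.e., the smallest k in {1, ..., n} maximizing Surj(n,k). Then M_n is asymptotically n/(2 log 2): the ratio M_n / (n / (2 log 2)) tends to 1 as n → ∞. -/
/-- The number of surjective functions from `Fin n` onto `Fin k`
(the ordered Stirling number `k! * S(n,k)`). -/
def Surj (n k : ℕ) : ℕ :=
  Fintype.card {f : Fin n → Fin k // Function.Surjective f}

open Finset

/-- A function out of `Fin (n + 1)` is onto iff its tail hits everything but possibly its head. -/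
lemma surjective_cons_iff {n : ℕ} {α : Type*} (b : α) (g : Fin n → α) :
    Function.Surjective (Fin.cons b g : Fin (n + 1) → α) ↔ ∀ y, y ≠ b → ∃ i, g i = y := by
  simp only [Function.Surjective, Fin.exists_fin_succ, Fin.cons_zero, Fin.cons_succ]
  exact forall_congr' fun y => by tauto

lemma card_surjective_or_avoids (n k : ℕ) (b : Fin (k + 1)) :
    Fintype.card {g : Fin n → Fin (k + 1) // ∀ y, y ≠ b → ∃ i, g i = y} =
      Surj n (k + 1) + Surj n k := by
  have h₁ : Surj n (k + 1) = Fintype.card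
      {g : {g : Fin n → Fin (k + 1) // ∀ y, y ≠ b → ∃ i, g i = y} // ∃ i, g.1 i = b} := by
    refine Fintype.card_congr ⟨fun f => ⟨⟨f.1, fun y _ => f.2 y⟩, f.2 b⟩,
      fun g => ⟨g.1.1, fun y => ?_⟩, fun _ => rfl, fun _ => rfl⟩
    by_cases h : y = b
    · exact h ▸ g.2
    · exact g.1.2 y h
  have h₂ : Surj n k = Fintype.card
      {g : {g : Fin n → Fin (k + 1) // ∀ y, y ≠ b → ∃ i, g i = y} // ¬ ∃ i, g.1 i = b} := by
    refine Fintype.card_of_bijective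
      (f := fun f => ⟨⟨fun i => b.succAbove (f.1 i), fun y hy => ?_⟩, ?_⟩) ⟨?_, ?_⟩
    · obtain ⟨z, rfl⟩ := Fin.exists_succAbove_eq hy
      obtain ⟨i, hi⟩ := f.2 z
      exact ⟨i, congrArg b.succAbove hi⟩
    · rintro ⟨i, hi⟩
      exact Fin.succAbove_ne _ _ hi
    · intro f g h
      ext i
      have := congrFun (congrArg (fun q => q.1.1) h) i
      exact congrArg Fin.val (Fin.succAbove_right_injective this)
    · rintro ⟨⟨g, hg⟩, hb⟩
      push Not at hb
      choose f hf using fun i => Fin.exists_succAbove_eq (hb i)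
      refine ⟨⟨f, fun z => ?_⟩, ?_⟩
      · obtain ⟨i, hi⟩ := hg _ (Fin.succAbove_ne b z)
        exact ⟨i, Fin.succAbove_right_injective ((hf i).trans hi)⟩
      · ext i
        simp [hf]
  rw [h₁, h₂, Fintype.card_subtype_compl, Nat.add_sub_cancel' (Fintype.card_subtype_le _)]

lemma Surj_succ_succ (n k : ℕ) :
    Surj (n + 1) (k + 1) = (k + 1) * (Surj n (k + 1) + Surj n k) := by
  have e : {f : Fin (n + 1) → Fin (k + 1) // Function.Surjective f} ≃
      Σ b : Fin (k + 1), {g : Fin n → Fin (k + 1) // ∀ y, y ≠ b → ∃ i, g i = y} :=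
    ⟨fun f => ⟨f.1 0, Fin.tail f.1, (surjective_cons_iff _ _).1 (by simpa using f.2)⟩,
      fun p => ⟨Fin.cons p.1 p.2.1, (surjective_cons_iff _ _).2 p.2.2⟩,
      fun f => by simp, fun _ => rfl⟩
  rw [Surj, Fintype.card_congr e, Fintype.card_sigma]
  simp [card_surjective_or_avoids]

lemma Surj_zero_right (n : ℕ) : Surj (n + 1) 0 = 0 :=
  Fintype.card_eq_zero_iff.2 ⟨fun f => (f.1 0).elim0⟩

lemma Surj_zero_zero : Surj 0 0 = 1 := by decide

lemma Surj_zero_succ (k : ℕ) : Surj 0 (k + 1) = 0 :=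
  Fintype.card_eq_zero_iff.2 ⟨fun f => (f.2 0).choose.elim0⟩

lemma Surj_eq_zero_of_lt {n k : ℕ} (h : n < k) : Surj n k = 0 :=
  Fintype.card_eq_zero_iff.2 ⟨fun f => by
    have := Fintype.card_le_of_surjective _ f.2
    simp at this
    lia⟩

lemma sum_choose_mul_Surj (n m : ℕ) :
    ∑ k ∈ range (m + 1), m.choose k * Surj n k = m ^ n := by
  induction n with
  | zero => simp [sum_range_succ', Surj_zero_zero, Surj_zero_succ]
  | succ n ih =>
    have h (k : ℕ) : m.choose (k + 1) * Surj (n + 1) (k + 1) =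
        (k + 1) * m.choose (k + 1) * Surj n (k + 1) + (m - k) * m.choose k * Surj n k := by
      rw [Surj_succ_succ, mul_comm (m - k), ← Nat.choose_succ_right_eq]
      ring
    have h₁ : ∑ k ∈ range m, (k + 1) * m.choose (k + 1) * Surj n (k + 1) =
        ∑ k ∈ range (m + 1), k * m.choose k * Surj n k := by
      simp [sum_range_succ']
    have h₂ : ∑ k ∈ range m, (m - k) * m.choose k * Surj n k =
        ∑ k ∈ range (m + 1), (m - k) * m.choose k * Surj n k := by
      simp [sum_range_succ]
    rw [sum_range_succ', Surj_zero_right, mul_zero, add_zero, sum_congr rfl fun k _ => h k,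
      sum_add_distrib, h₁, h₂, ← sum_add_distrib, pow_succ, ← ih, sum_mul]
    refine sum_congr rfl fun k hk => ?_
    rw [← add_mul, ← add_mul, Nat.add_sub_cancel' (Nat.lt_succ_iff.1 (mem_range.1 hk))]
    ring

/-- Any upper bound of the row `Surj n ·` dominates every `m ^ n / 2 ^ m`. -/
lemma pow_le_two_pow_mul_of_Surj_le {n A : ℕ} (h : ∀ k, Surj n k ≤ A) (m : ℕ) :
    m ^ n ≤ 2 ^ m * A := by
  rw [← sum_choose_mul_Surj, ← Nat.sum_range_choose, sum_mul]
  exact sum_le_sum fun k _ => Nat.mul_le_mul_left _ (h k)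

/-- The coefficient of `x ^ n` in the exponential generating function `(exp x - 1) ^ k`
is bounded by its value. -/
lemma Surj_mul_pow_div_factorial_le (n k : ℕ) {x : ℝ} (hx : 0 ≤ x) :
    Surj n k * (x ^ n / n.factorial) ≤ (Real.exp x - 1) ^ k := by
  have hexp {y : ℝ} (hy : 0 ≤ y) : 0 ≤ Real.exp y - 1 := by linarith [Real.add_one_le_exp y]
  induction n generalizing k x with
  | zero =>
    cases k with
    | zero => simp [Surj_zero_zero]
    | succ k => simpa [Surj_zero_succ] using pow_nonneg (hexp hx) _
  | succ n ih =>
    cases k with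
    | zero => simp [Surj_zero_right]
    | succ k =>
      let F : ℝ → ℝ := fun y =>
        (Real.exp y - 1) ^ (k + 1) - Surj (n + 1) (k + 1) * (y ^ (n + 1) / (n + 1).factorial)
      have hF (y : ℝ) : HasDerivAt F ((k + 1) * ((Real.exp y - 1) ^ (k + 1)
          + (Real.exp y - 1) ^ k - (Surj n (k + 1) * (y ^ n / n.factorial)
          + Surj n k * (y ^ n / n.factorial)))) y := by
        refine ((((Real.hasDerivAt_exp y).sub_const 1).pow (k + 1)).sub
          (((hasDerivAt_pow (n + 1) y).div_const _).const_mul _)).congr_deriv ?_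
        rw [Surj_succ_succ, Nat.factorial_succ]
        push_cast
        have : (n.factorial : ℝ) ≠ 0 := by positivity
        have : (n + 1 : ℝ) ≠ 0 := by positivity
        field_simp
        ring
      have hmono : MonotoneOn F (Set.Ici 0) := by
        refine monotoneOn_of_deriv_nonneg (convex_Ici 0)
          (fun y _ => (hF y).continuousAt.continuousWithinAt)
          (fun y _ => (hF y).differentiableAt.differentiableWithinAt) fun y hy => ?_
        rw [interior_Ici] at hy
        rw [(hF y).deriv]
        have := ih (k + 1) hy.le
        have := ih k hy.le
        exact mul_nonneg (by positivity) (by linarith)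
      have := hmono Set.self_mem_Ici hx hx
      simpa [F] using this

lemma log_factorial_le {n : ℕ} (hn : 1 ≤ n) :
    Real.log n.factorial ≤ n * Real.log n - n + Real.log n + 1 := by
  induction n, hn using Nat.le_induction with
  | base => simp
  | succ n hn ih =>
    have hn' : (0 : ℝ) < n := by exact_mod_cast hn
    have h : Real.log n - Real.log (n + 1) ≤ n / (n + 1) - 1 := by
      rw [← Real.log_div (by positivity) (by positivity)]
      exact Real.log_le_sub_one_of_pos (by positivity)
    have h' : (n + 1) * (Real.log n - Real.log (n + 1)) ≤ -1 := by
      calc _ ≤ (n + 1) * ((n : ℝ) / (n + 1) - 1) := by gcongr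
        _ = -1 := by field_simp; ring
    rw [Nat.factorial_succ, Nat.cast_mul, Real.log_mul (by positivity) (by positivity)]
    push_cast
    linarith

lemma log_bound_of_isMode {n M : ℕ} (hn : 1 ≤ n) (hM : ∀ k, Surj n k ≤ Surj n M)
    {x : ℝ} (hx : 0 < x) :
    0 ≤ n * (Real.log (Real.log 2) - Real.log x) + M * Real.log (Real.exp x - 1)
      + (Real.log n + 2) := by
  have hL : 0 < Real.log 2 := Real.log_pos one_lt_two
  have hn' : (0 : ℝ) < n := by exact_mod_cast hn
  have hexp : 0 < Real.exp x - 1 := by linarith [Real.add_one_lt_exp hx.ne']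
  set m := ⌈(n : ℝ) / Real.log 2⌉₊
  have hm : (n : ℝ) / Real.log 2 ≤ m := Nat.le_ceil _
  have hm' : m * Real.log 2 ≤ n + 1 := by
    have h : (m : ℝ) ≤ n / Real.log 2 + 1 := (Nat.ceil_lt_add_one (by positivity)).le
    calc m * Real.log 2 ≤ (n / Real.log 2 + 1) * Real.log 2 := by gcongr
      _ = n + Real.log 2 := by field_simp
      _ ≤ n + 1 := by linarith [Real.log_two_lt_d9]
  have hm0 : (0 : ℝ) < m := lt_of_lt_of_le (by positivity) hm
  have hlow : (m : ℝ) ^ n ≤ 2 ^ m * Surj n M := by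
    exact_mod_cast pow_le_two_pow_mul_of_Surj_le hM m
  have hup := Surj_mul_pow_div_factorial_le n M hx.le
  rw [← mul_div_assoc, div_le_iff₀ (by positivity)] at hup
  have key : (m : ℝ) ^ n * x ^ n ≤ 2 ^ m * ((Real.exp x - 1) ^ M * n.factorial) :=
    calc (m : ℝ) ^ n * x ^ n ≤ 2 ^ m * Surj n M * x ^ n := by gcongr
      _ = 2 ^ m * (Surj n M * x ^ n) := by ring
      _ ≤ _ := by gcongr
  have hlog := Real.log_le_log (by positivity) key
  rw [Real.log_mul (by positivity) (by positivity), Real.log_mul (by positivity) (by positivity),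
    Real.log_mul (by positivity) (by positivity), Real.log_pow, Real.log_pow, Real.log_pow,
    Real.log_pow] at hlog
  have hlogm : Real.log n - Real.log (Real.log 2) ≤ Real.log m := by
    rw [← Real.log_div (by positivity) (by positivity)]
    exact Real.log_le_log (by positivity) hm
  have := mul_le_mul_of_nonneg_left hlogm hn'.le
  linarith [log_factorial_le hn]

lemma hasDerivAt_mode_exponent (c : ℝ) :
    HasDerivAt (fun x => Real.log (Real.log 2) - Real.log x + c * Real.log (Real.exp x - 1))
      (2 * c - (Real.log 2)⁻¹) (Real.log 2) := by
  have hL : 0 < Real.log 2 := Real.log_pos one_lt_two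
  have h2 : Real.exp (Real.log 2) = 2 := Real.exp_log two_pos
  refine (((Real.hasDerivAt_log hL.ne').const_sub _).add
    ((((Real.hasDerivAt_exp (Real.log 2)).sub_const 1).log (by rw [h2]; norm_num)).const_mul
      c)).congr_deriv ?_
  rw [h2]
  ring

open Filter Topology

lemma tendsto_log_add_two_div : Tendsto (fun n : ℕ => (Real.log n + 2) / n) atTop (𝓝 0) := by
  have h : Tendsto (fun n : ℕ => Real.log n / n) atTop (𝓝 0) :=
    (Real.isLittleO_log_id_atTop.tendsto_div_nhds_zero).comp tendsto_natCast_atTop_atTop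
  simpa [add_div] using h.add (tendsto_const_div_atTop_nhds_zero_nat (2 : ℝ))

/-- If the exponent at `c` is negative at `x`, the ratio of the mode to `n` eventually lies
strictly on the side of `c` where the exponent is larger. -/
lemma eventually_mul_log_lt_of_isMode {M : ℕ → ℕ}
    (hM : ∀ n, 1 ≤ n → ∀ k, Surj n k ≤ Surj n (M n)) {c x : ℝ} (hx : 0 < x)
    (hneg : Real.log (Real.log 2) - Real.log x + c * Real.log (Real.exp x - 1) < 0) :
    ∀ᶠ n : ℕ in atTop,
      c * Real.log (Real.exp x - 1) < (M n / n : ℝ) * Real.log (Real.exp x - 1) := by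
  filter_upwards [tendsto_log_add_two_div.eventually_lt_const (neg_pos.2 hneg),
    eventually_ge_atTop 1] with n hn hn1
  have hn' : (0 : ℝ) < n := by exact_mod_cast hn1
  have h := div_nonneg (log_bound_of_isMode hn1 (hM n hn1) hx) hn'.le
  rw [add_div, add_div, mul_div_cancel_left₀ _ hn'.ne', mul_div_right_comm] at h
  linarith

lemma tendsto_mode_div {M : ℕ → ℕ} (hM : ∀ n, 1 ≤ n → ∀ k, Surj n k ≤ Surj n (M n)) :
    Tendsto (fun n : ℕ => (M n / n : ℝ)) atTop (𝓝 (2 * Real.log 2)⁻¹) := by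
  have hL : 0 < Real.log 2 := Real.log_pos one_lt_two
  have h0 (c : ℝ) : Real.log (Real.log 2) - Real.log (Real.log 2)
      + c * Real.log (Real.exp (Real.log 2) - 1) = 0 := by
    rw [Real.exp_log two_pos]; norm_num
  refine tendsto_order.2 ⟨fun c hc => ?_, fun c hc => ?_⟩
  · have hd : 2 * c - (Real.log 2)⁻¹ < 0 := by rw [mul_inv] at hc; linarith
    have hslopes := (hasDerivWithinAt_iff_tendsto_slope' (s := Set.Ioi (Real.log 2))
      (by simp)).1 (hasDerivAt_mode_exponent c).hasDerivWithinAt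
    obtain ⟨x, hslope, hx⟩ := (hslopes.eventually_lt_const hd |>.and
      self_mem_nhdsWithin).exists
    have hx' : Real.log 2 < x := hx
    rw [slope_def_field, h0, sub_zero, div_neg_iff] at hslope
    have hneg' := (hslope.resolve_left fun h => by linarith [h.2]).1
    have hpos : 0 < Real.log (Real.exp x - 1) :=
      Real.log_pos (by linarith [(Real.log_lt_iff_lt_exp two_pos).1 hx'])
    filter_upwards [eventually_mul_log_lt_of_isMode hM (hL.trans hx') hneg'] with n hn
    exact lt_of_mul_lt_mul_right hn hpos.le
  · have hd : 0 < 2 * c - (Real.log 2)⁻¹ := by rw [mul_inv] at hc; linarith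
    have hslopes := (hasDerivWithinAt_iff_tendsto_slope' (s := Set.Iio (Real.log 2))
      (by simp)).1 (hasDerivAt_mode_exponent c).hasDerivWithinAt
    obtain ⟨x, ⟨hslope, hx⟩, hx0⟩ := (hslopes.eventually_const_lt hd |>.and
      self_mem_nhdsWithin |>.and (mem_nhdsWithin_of_mem_nhds (Ioi_mem_nhds hL))).exists
    have hx' : x < Real.log 2 := hx
    have hx0' : 0 < x := hx0
    rw [slope_def_field, h0, sub_zero, div_pos_iff] at hslope
    have hneg' := (hslope.resolve_left fun h => by linarith [h.2]).1
    have hneg : Real.log (Real.exp x - 1) < 0 :=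
      Real.log_neg (by linarith [Real.add_one_lt_exp hx0'.ne'])
        (by linarith [(Real.lt_log_iff_exp_lt two_pos).1 hx'])
    filter_upwards [eventually_mul_log_lt_of_isMode hM hx0' hneg'] with n hn
    exact lt_of_mul_lt_mul_of_nonpos_right hn hneg.le

/-- The smallest mode `M n` of the sequence `Surj n 1, …, Surj n n` of
ordered Stirling numbers satisfies `M n ∼ n / (2 log 2)` as `n → ∞`. -/
theorem mode_ordered_stirling_asymptotic
    (M : ℕ → ℕ)
    (hmem : ∀ n, 1 ≤ n → M n ∈ Finset.Icc 1 n)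
    (hmax : ∀ n, 1 ≤ n → ∀ k ∈ Finset.Icc 1 n, Surj n k ≤ Surj n (M n))
    (hmin : ∀ n, 1 ≤ n → ∀ k ∈ Finset.Icc 1 n,
      (∀ j ∈ Finset.Icc 1 n, Surj n j ≤ Surj n k) → M n ≤ k) :
    Filter.Tendsto (fun n : ℕ => (M n : ℝ) / ((n : ℝ) / (2 * Real.log 2)))
      Filter.atTop (nhds 1) := by
  have hM : ∀ n, 1 ≤ n → ∀ k, Surj n k ≤ Surj n (M n) := by
    intro n hn k
    rcases Nat.eq_zero_or_pos k with rfl | hk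
    · obtain ⟨n, rfl⟩ := Nat.exists_eq_add_of_le' hn
      simp [Surj_zero_right]
    · rcases le_or_gt k n with hkn | hkn
      · exact hmax n hn k (Finset.mem_Icc.2 ⟨hk, hkn⟩)
      · simp [Surj_eq_zero_of_lt hkn]
  have hL : 2 * Real.log 2 ≠ 0 := by positivity
  have h := (tendsto_mode_div hM).mul_const (2 * Real.log 2)
  rw [inv_mul_cancel₀ hL] at h
  exact h.congr fun n => by rw [div_div_eq_mul_div, div_mul_eq_mul_div]
end

section
/- (Velleman–Call) The Fubini numbers F_n = Σ_{k=0}^{n} Surj(n,k) satisfy the asymptotic F_n ~ (1/(2 log 2)) · n! / (log 2)^n as n → ∞; that is, F_n · (log 2)^n · (2 log 2) / n! tends to 1. -/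
/-- The `n`-th Fubini number (ordered Bell number):
the number of ordered set partitions of an `n`-element set. -/
def Fubini (n : ℕ) : ℕ :=
  ∑ k ∈ Finset.range (n + 1), Surj n k

open Finset PowerSeries

theorem card_image_eq (n m : ℕ) (T : Finset (Fin m)) :
    #{f : Fin n → Fin m | univ.image f = T} = Surj n #T := by
  rw [Surj, ← Fintype.card_subtype]
  refine Fintype.card_congr
    { toFun f := ⟨fun i => T.equivFin ⟨f.1 i,
          (Finset.ext_iff.1 f.2 _).1 (mem_image_of_mem _ (mem_univ i))⟩,
        fun j => ?_⟩
      invFun g := ⟨fun i => (T.equivFin.symm (g.1 i) : Fin m), ?_⟩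
      left_inv f := by simp
      right_inv g := by simp }
  · obtain ⟨i, -, hi⟩ := mem_image.1 ((Finset.ext_iff.1 f.2 _).2 (T.equivFin.symm j).2)
    exact ⟨i, by simp [hi]⟩
  · ext x
    simp only [mem_image, mem_univ, true_and]
    constructor
    · rintro ⟨i, rfl⟩
      exact coe_mem _
    · intro hx
      obtain ⟨i, hi⟩ := g.2 (T.equivFin ⟨x, hx⟩)
      exact ⟨i, by simp [hi]⟩

theorem pow_eq_sum_choose_mul_surj (n m : ℕ) :
    m ^ n = ∑ k ∈ range (m + 1), m.choose k * Surj n k := by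
  have h := Finset.card_eq_sum_card_fiberwise (s := (univ : Finset (Fin n → Fin m)))
    (f := fun f => univ.image f) (t := (univ : Finset (Fin m)).powerset) (by intro f _; simp)
  simp only [card_image_eq] at h
  rw [Finset.sum_powerset_apply_card (fun k => Surj n k)] at h
  simpa using h

theorem mk_surj_div_factorial (k : ℕ) :
    (PowerSeries.mk fun n => (Surj n k : ℝ) / n.factorial) = (exp ℝ - 1) ^ k := by
  induction k using Nat.strong_induction_on with
  | _ m ih =>
    have h1 : exp ℝ ^ m = ∑ k ∈ range (m + 1),
        (m.choose k : ℝ⟦X⟧) * PowerSeries.mk fun n => (Surj n k : ℝ) / n.factorial := by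
      ext n
      have := congrArg (Nat.cast (R := ℝ)) (pow_eq_sum_choose_mul_surj n m)
      push_cast at this
      simp only [exp_pow_eq_rescale_exp, coeff_rescale, coeff_exp, map_sum, ← nsmul_eq_mul,
        map_nsmul, coeff_mk, this, sum_mul]
      refine sum_congr rfl fun k _ => ?_
      simp [div_eq_mul_inv]
      ring
    have h2 : exp ℝ ^ m = ∑ k ∈ range (m + 1), (m.choose k : ℝ⟦X⟧) * (exp ℝ - 1) ^ k := by
      conv_lhs => rw [← sub_add_cancel (exp ℝ) 1, add_pow]
      exact sum_congr rfl fun k _ => by ring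
    rw [h2, sum_range_succ, sum_range_succ,
      sum_congr rfl fun k hk => by rw [← ih k (mem_range.1 hk)]] at h1
    simpa using (add_left_cancel h1).symm

theorem coeff_exp_sub_one_pow_eq_zero {n k : ℕ} (h : n < k) :
    coeff n ((exp ℝ - 1) ^ k) = 0 :=
  X_pow_dvd_iff.1 (pow_dvd_pow_of_dvd (X_dvd_iff.2 (by simp)) k) n h

theorem fubini_div_factorial {m n : ℕ} (h : m ≤ n) :
    (Fubini m : ℝ) / m.factorial = coeff m (∑ k ∈ range (n + 1), (exp ℝ - 1) ^ k) := by
  have hsub : range (m + 1) ⊆ range (n + 1) := range_subset_range.2 (by lia)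
  rw [map_sum, ← sum_subset hsub fun k _ hk =>
    coeff_exp_sub_one_pow_eq_zero (by rw [mem_range] at hk; lia)]
  simp [Fubini, sum_div, ← mk_surj_div_factorial]

/-- The exponential generating function of the Fubini numbers is `1 / (2 - exp x)`. -/
theorem mk_fubini_div_factorial_mul :
    (PowerSeries.mk fun n => (Fubini n : ℝ) / n.factorial) * (2 - exp ℝ) = 1 := by
  ext n
  have h : coeff n ((∑ k ∈ range (n + 1), (exp ℝ - 1) ^ k) * (2 - exp ℝ)) =
      coeff n (1 : ℝ⟦X⟧) := by
    rw [show (2 - exp ℝ : ℝ⟦X⟧) = 1 - (exp ℝ - 1) by ring, geom_sum_mul_neg, map_sub,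
      coeff_exp_sub_one_pow_eq_zero n.lt_succ_self, sub_zero]
  rw [← h, coeff_mul, coeff_mul]
  refine sum_congr rfl fun p hp => ?_
  rw [coeff_mk, fubini_div_factorial (HasAntidiagonal.mem_antidiagonal.1 hp ▸ Nat.le_add_right _ _)]

/-- The remainder of order `k` of the exponential series at `log 2`. -/
noncomputable def expTail (k : ℕ) : ℝ :=
  2 - ∑ j ∈ range (k + 1), Real.log 2 ^ j / j.factorial

/-- The Fubini numbers, rescaled so as to be bounded. -/
noncomputable def scaledFubini (n : ℕ) : ℝ :=
  Fubini n * Real.log 2 ^ n / n.factorial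

theorem sum_expTail_mul_scaledFubini (n : ℕ) :
    ∑ k ∈ range (n + 1), expTail k * scaledFubini (n - k) = 1 := by
  have hU : PowerSeries.mk scaledFubini * (2 - rescale (Real.log 2) (exp ℝ)) = 1 := by
    have h := congrArg (rescale (Real.log 2)) mk_fubini_div_factorial_mul
    rw [map_mul, map_sub, map_one, map_ofNat] at h
    rw [← h]
    congr 1
    ext k
    simp only [coeff_mk, coeff_rescale, scaledFubini]
    ring
  have hR : PowerSeries.mk expTail = (2 - rescale (Real.log 2) (exp ℝ)) * PowerSeries.mk 1 := by
    ext k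
    rw [coeff_mul, Nat.sum_antidiagonal_eq_sum_range_succ_mk]
    have h2 (j : ℕ) : coeff j (2 : ℝ⟦X⟧) = if j = 0 then 2 else 0 := by
      rw [← coeff_C, map_ofNat C]
    simp [expTail, h2, coeff_exp, div_eq_mul_inv]
  have h : PowerSeries.mk expTail * PowerSeries.mk scaledFubini = PowerSeries.mk 1 := by
    rw [hR, mul_right_comm, mul_comm (2 - _), hU, one_mul]
  have := congrArg (coeff n) h
  rw [coeff_mul, Nat.sum_antidiagonal_eq_sum_range_succ_mk] at this
  simpa using this

theorem expTail_zero : expTail 0 = 1 := by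
  norm_num [expTail]

theorem expTail_nonneg (k : ℕ) : 0 ≤ expTail k := by
  have h := Real.sum_le_exp_of_nonneg (Real.log_nonneg one_le_two) (k + 1)
  rw [Real.exp_log two_pos] at h
  exact sub_nonneg.2 h

theorem sum_expTail (n : ℕ) :
    ∑ k ∈ range (n + 2), expTail k =
      2 * Real.log 2 - Real.log 2 * expTail n + (n + 2) * expTail (n + 1) := by
  induction n with
  | zero =>
    simp [expTail, sum_range_succ]
    ring
  | succ n ih =>
    have h (k : ℕ) : expTail (k + 1) =
        expTail k - Real.log 2 ^ (k + 1) / (k + 1).factorial := by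
      rw [expTail, expTail, sum_range_succ]
      ring
    have hn : (n.factorial : ℝ) ≠ 0 := by positivity
    rw [sum_range_succ, ih, h (n + 1), h n]
    push_cast [Nat.factorial_succ]
    field_simp
    ring

theorem expTail_le (k : ℕ) : expTail k ≤ (2 / 5) ^ k := by
  rcases k with _ | k
  · simp [expTail_zero]
  have h0 : 0 < Real.log 2 := Real.log_pos one_lt_two
  have h1 : Real.log 2 ≤ 0.7 := by linarith [Real.log_two_lt_d9]
  have h := (abs_le.1 (Real.exp_bound (x := Real.log 2) (n := k + 2)
    (by rw [abs_of_pos h0]; linarith) (by lia))).2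
  rw [Real.exp_log two_pos, abs_of_pos h0] at h
  refine h.trans ?_
  clear h
  induction k with
  | zero =>
    norm_num
    nlinarith
  | succ k ih =>
    rw [pow_succ _ (k + 1)]
    refine le_trans ?_ (mul_le_mul_of_nonneg_right ih (by norm_num))
    rw [show k + 1 + 2 = k + 2 + 1 by ring, pow_succ, mul_assoc, mul_assoc]
    refine mul_le_mul_of_nonneg_left ?_ (by positivity)
    have hk : (0 : ℝ) < (k + 2).factorial := by positivity
    rw [Nat.factorial_succ (k + 2)]
    push_cast
    rw [← mul_div_assoc, div_mul_eq_mul_div, div_le_div_iff₀ (by positivity) (by positivity)]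
    have hlog : Real.log 2 * ((k + 2) * (k + 4)) ≤ 0.7 * (k + 3) ^ 2 := by
      gcongr
      linarith
    nlinarith [mul_nonneg hk.le (sub_nonneg.2 hlog), mul_nonneg hk.le (sq_nonneg (k + 3 : ℝ)),
      mul_nonneg (mul_nonneg hk.le (sq_nonneg (k + 3 : ℝ))) k.cast_nonneg]

theorem abs_one_sub_sum_expTail_le (n : ℕ) :
    |1 - (∑ k ∈ range (n + 1), expTail k) / (2 * Real.log 2)| ≤ 2 * (9 / 10) ^ n := by
  have hlog : 0.69 < Real.log 2 := by linarith [Real.log_two_gt_d9]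
  have hpos : 0 < Real.log 2 := by linarith
  rw [one_sub_div (by positivity), abs_div, abs_of_pos (by positivity : 0 < 2 * Real.log 2),
    div_le_iff₀ (by positivity)]
  rcases n with _ | n
  · rw [sum_range_one, expTail_zero, abs_le]
    constructor <;> linarith
  have hn : ((n : ℝ) + 2) ≤ 2 ^ (n + 1) := by exact_mod_cast (n + 1).lt_two_pow_self
  have htail : (n + 2) * expTail (n + 1) ≤ (9 / 10) ^ (n + 1) := calc
    _ ≤ (2 : ℝ) ^ (n + 1) * (2 / 5) ^ (n + 1) := by
      gcongr
      · exact expTail_nonneg _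
      · exact expTail_le _
    _ = (4 / 5) ^ (n + 1) := by rw [← mul_pow]; norm_num
    _ ≤ (9 / 10) ^ (n + 1) := pow_le_pow_left₀ (by norm_num) (by norm_num) _
  have htail' : expTail n ≤ (10 / 9) * (9 / 10) ^ (n + 1) := calc
    _ ≤ (2 / 5 : ℝ) ^ n := expTail_le n
    _ ≤ (9 / 10) ^ n := pow_le_pow_left₀ (by norm_num) (by norm_num) _
    _ = _ := by ring
  have hρ : (0 : ℝ) < (9 / 10) ^ (n + 1) := by positivity
  have hmul := mul_le_mul_of_nonneg_left htail' hpos.le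
  have hmul0 := mul_nonneg hpos.le (expTail_nonneg n)
  have hnonneg : 0 ≤ (n + 2) * expTail (n + 1) := mul_nonneg (by positivity) (expTail_nonneg _)
  rw [sum_expTail, abs_le]
  constructor <;> nlinarith

theorem abs_scaledFubini_sub_le (n : ℕ) :
    |scaledFubini n - 1 / (2 * Real.log 2)| ≤ 10 * (9 / 10) ^ n := by
  induction n using Nat.strong_induction_on with
  | _ n ih =>
    set L : ℝ := 1 / (2 * Real.log 2) with hL
    have hrec : scaledFubini n - L = (1 - (∑ k ∈ range (n + 1), expTail k) / (2 * Real.log 2)) -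
        ∑ k ∈ range n, expTail (k + 1) * (scaledFubini (n - (k + 1)) - L) := by
      have h := sum_expTail_mul_scaledFubini n
      rw [sum_range_succ'] at h
      simp only [expTail_zero, Nat.sub_zero, one_mul] at h
      rw [sum_range_succ', expTail_zero]
      simp only [mul_sub, sum_sub_distrib, ← sum_mul, hL]
      linear_combination h
    have hsum : |∑ k ∈ range n, expTail (k + 1) * (scaledFubini (n - (k + 1)) - L)| ≤
        8 * (9 / 10) ^ n := calc
      _ ≤ ∑ k ∈ range n, |expTail (k + 1) * (scaledFubini (n - (k + 1)) - L)| :=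
        abs_sum_le_sum_abs _ _
      _ ≤ ∑ k ∈ range n, 10 * (9 / 10) ^ n * (4 / 9) * (4 / 9 : ℝ) ^ k := by
        refine sum_le_sum fun k hk => ?_
        have hk' := mem_range.1 hk
        rw [abs_mul, abs_of_nonneg (expTail_nonneg _)]
        refine (mul_le_mul (expTail_le (k + 1)) (ih (n - (k + 1)) (by lia)) (abs_nonneg _)
          (by positivity)).trans_eq ?_
        have hpow : (9 / 10 : ℝ) ^ n = (9 / 10) ^ (n - (k + 1)) * (9 / 10) ^ (k + 1) := by
          rw [← pow_add, Nat.sub_add_cancel hk']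
        have hbase : (2 / 5 : ℝ) ^ (k + 1) = (9 / 10) ^ (k + 1) * (4 / 9) ^ (k + 1) := by
          rw [← mul_pow]
          norm_num
        rw [hpow, hbase]
        ring
      _ ≤ 8 * (9 / 10) ^ n := by
        rw [← mul_sum, geom_sum_eq (by norm_num)]
        have h1 : (0 : ℝ) < (9 / 10) ^ n := by positivity
        have h2 : (0 : ℝ) < (4 / 9) ^ n := by positivity
        rw [show ((4 / 9 : ℝ) ^ n - 1) / (4 / 9 - 1) = 9 / 5 * (1 - (4 / 9) ^ n) by ring]
        nlinarith [mul_pos h1 h2]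
    rw [hrec]
    linarith [abs_sub (1 - (∑ k ∈ range (n + 1), expTail k) / (2 * Real.log 2))
      (∑ k ∈ range n, expTail (k + 1) * (scaledFubini (n - (k + 1)) - L)),
      abs_one_sub_sum_expTail_le n]

/-- (Velleman–Call) `Fₙ ∼ (1/(2 log 2)) · n! / (log 2)ⁿ` as `n → ∞`. -/
theorem fubini_asymptotic :
    Filter.Tendsto
      (fun n : ℕ => (Fubini n : ℝ) * (Real.log 2) ^ n * (2 * Real.log 2) / (n.factorial : ℝ))
      Filter.atTop (nhds 1) := by
  have hlog : 0 < Real.log 2 := Real.log_pos one_lt_two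
  have hbound : Filter.Tendsto (fun n : ℕ => 10 * (9 / 10 : ℝ) ^ n) Filter.atTop (nhds 0) := by
    simpa using (tendsto_pow_atTop_nhds_zero_of_lt_one (r := (9 / 10 : ℝ))
      (by norm_num) (by norm_num)).const_mul 10
  have h := (tendsto_iff_norm_sub_tendsto_zero.2
    (squeeze_zero (fun _ => norm_nonneg _) abs_scaledFubini_sub_le hbound)).mul_const
      (2 * Real.log 2)
  rw [one_div_mul_cancel (by positivity)] at h
  refine h.congr fun n => ?_
  rw [scaledFubini]
  ring
end

section
/- (Darroch) Let a_0, a_1, ..., a_n be nonnegative real numbers such that the polynomial p(x) = a_0 + a_1 x + ... + a_n x^n has only real zeros (every complex root of p is real) and p(1) > 0. Then the sequence (a_k) is unimodal, and every index M ∈ {0, ..., n} at which a_M is maximal satisfies |M - p'(1)/p(1)| < 1. -/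
open Polynomial

/-- The generating polynomial of a sum of independent Bernoulli variables with means `t i`. -/
noncomputable def bernoulliProd {n : ℕ} (t : Fin n → ℝ) : ℝ[X] :=
  ∏ i, (C (1 - t i) + C (t i) * X)

/-- The Bernoulli mean vectors with total mean `σ`. -/
def meanSlice (n : ℕ) (σ : ℝ) : Set (Fin n → ℝ) :=
  {t | (∀ i, t i ∈ Set.Icc (0 : ℝ) 1) ∧ ∑ i, t i = σ}

lemma isCompact_meanSlice (n : ℕ) (σ : ℝ) : IsCompact (meanSlice n σ) := by
  have h : meanSlice n σ = Set.pi Set.univ (fun _ => Set.Icc (0 : ℝ) 1) ∩ {t | ∑ i, t i = σ} := by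
    ext t; simp only [meanSlice, Set.mem_inter_iff, Set.mem_univ_pi]; rfl
  rw [h]
  exact (isCompact_univ_pi fun _ => isCompact_Icc).inter_right
    (isClosed_eq (by fun_prop) continuous_const)

lemma continuous_linearMap_bernoulliProd {n : ℕ} (L : ℝ[X] →ₗ[ℝ] ℝ) :
    Continuous fun t : Fin n → ℝ => L (bernoulliProd t) := by
  have h : ∀ t : Fin n → ℝ, L (bernoulliProd t) = ∑ S ∈ (Finset.univ : Finset (Fin n)).powerset,
      ((∏ i ∈ S, (1 - t i)) * ∏ i ∈ Finset.univ \ S, t i) * L (X ^ (Finset.univ \ S).card) := by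
    intro t
    rw [bernoulliProd, Finset.prod_add, map_sum]
    refine Finset.sum_congr rfl fun S _ => ?_
    rw [Finset.prod_mul_distrib, Finset.prod_const, ← map_prod, ← map_prod, ← mul_assoc, ← C_mul,
      ← smul_eq_C_mul, map_smul, smul_eq_mul]
  simp only [h]
  fun_prop

/-- Moving mass between two coordinates changes a linear functional of the product affinely in the
product of the two coordinates. -/
lemma exists_pair_update {n : ℕ} (L : ℝ[X] →ₗ[ℝ] ℝ) (t : Fin n → ℝ) {i j : Fin n} (hij : i ≠ j) :
    ∃ c : ℝ, ∀ u v : ℝ, u + v = t i + t j →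
      L (bernoulliProd (Function.update (Function.update t i u) j v)) =
        L (bernoulliProd t) + c * (u * v - t i * t j) := by
  set G : ℝ[X] := ∏ l ∈ (Finset.univ.erase i).erase j, (C (1 - t l) + C (t l) * X)
  have hj : j ∈ (Finset.univ : Finset (Fin n)).erase i := by simp [hij.symm]
  have split : ∀ s : Fin n → ℝ, (∀ l, l ≠ i → l ≠ j → s l = t l) → bernoulliProd s =
      (C (1 - s i) + C (s i) * X) * ((C (1 - s j) + C (s j) * X) * G) := by
    intro s hs
    rw [bernoulliProd, ← Finset.mul_prod_erase _ _ (Finset.mem_univ i),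
      ← Finset.mul_prod_erase _ _ hj]
    congr 2
    refine Finset.prod_congr rfl fun l hl => ?_
    simp only [Finset.mem_erase, Finset.mem_univ, and_true] at hl
    rw [hs l hl.2 hl.1]
  refine ⟨L ((X - 1) ^ 2 * G), fun u v huv => ?_⟩
  rw [split t fun _ _ _ => rfl, split (Function.update (Function.update t i u) j v)
    fun l hi hj => by simp [hi, hj]]
  rw [mul_comm (L _), ← smul_eq_mul (u * v - t i * t j), ← map_smul, ← map_add, smul_eq_C_mul]
  congr 1
  obtain rfl : v = t i + t j - u := by linarith
  simp [hij]
  ring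

lemma update_pair_mem_meanSlice {n : ℕ} {σ : ℝ} {t : Fin n → ℝ} (ht : t ∈ meanSlice n σ)
    {i j : Fin n} (hij : i ≠ j) {u v : ℝ} (hu : u ∈ Set.Icc (0 : ℝ) 1) (hv : v ∈ Set.Icc (0 : ℝ) 1)
    (huv : u + v = t i + t j) :
    Function.update (Function.update t i u) j v ∈ meanSlice n σ := by
  refine ⟨fun l => ?_, ?_⟩
  · by_cases hl : l = j
    · subst hl; simpa using hv
    · by_cases hl' : l = i
      · subst hl'; simpa [hl] using hu
      · simpa [hl, hl'] using ht.1 l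
  · have hj : j ∈ (Finset.univ : Finset (Fin n)).erase i := by simp [hij.symm]
    have h := ht.2
    rw [← Finset.add_sum_erase _ _ (Finset.mem_univ i), ← Finset.add_sum_erase _ _ hj] at h ⊢
    rw [Finset.sum_congr rfl (g := t)]
    · simp [hij]; linarith
    · intro l hl
      simp only [Finset.mem_erase, Finset.mem_univ, and_true] at hl
      simp [hl.1, hl.2]

lemma sum_sq_update_pair {n : ℕ} (t : Fin n → ℝ) {i j : Fin n} (hij : i ≠ j) (u v : ℝ) :
    ∑ l, Function.update (Function.update t i u) j v l ^ 2 =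
      ∑ l, t l ^ 2 + (u ^ 2 + v ^ 2 - t i ^ 2 - t j ^ 2) := by
  have hj : j ∈ (Finset.univ : Finset (Fin n)).erase i := by simp [hij.symm]
  simp only [← Finset.add_sum_erase _ _ (Finset.mem_univ i), ← Finset.add_sum_erase _ _ hj]
  rw [Finset.sum_congr rfl (g := fun l => t l ^ 2)]
  · simp [hij]; ring
  · intro l hl
    simp only [Finset.mem_erase, Finset.mem_univ, and_true] at hl
    simp [hl.1, hl.2]

/-- Hoeffding's extremal principle: on a slice of constant total mean, a linear functional of the
generating polynomial attains its maximum where all means in `(0, 1)` coincide. -/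
lemma exists_extremal_means {n : ℕ} (L : ℝ[X] →ₗ[ℝ] ℝ) {σ : ℝ} {t : Fin n → ℝ}
    (ht : t ∈ meanSlice n σ) :
    ∃ s ∈ meanSlice n σ, L (bernoulliProd t) ≤ L (bernoulliProd s) ∧
      ∃ θ ∈ Set.Icc (0 : ℝ) 1, ∀ i, s i = 0 ∨ s i = 1 ∨ s i = θ := by
  obtain ⟨r, hr, hrmax⟩ := (isCompact_meanSlice n σ).exists_isMaxOn ⟨t, ht⟩
    (continuous_linearMap_bernoulliProd L).continuousOn
  have hcompact : IsCompact (meanSlice n σ ∩ {s | L (bernoulliProd s) = L (bernoulliProd r)}) :=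
    (isCompact_meanSlice n σ).inter_right
      (isClosed_eq (continuous_linearMap_bernoulliProd L) continuous_const)
  obtain ⟨s, ⟨hs, hsr⟩, hsmin⟩ := hcompact.exists_isMinOn (f := fun s => ∑ l, s l ^ 2)
    ⟨r, hr, rfl⟩ (Continuous.continuousOn (by fun_prop))
  have hsmax : ∀ s' ∈ meanSlice n σ, L (bernoulliProd s') ≤ L (bernoulliProd s) := fun s' hs' =>
    (hrmax hs').trans_eq hsr.symm
  have heq : ∀ i j, s i ∈ Set.Ioo (0 : ℝ) 1 → s j ∈ Set.Ioo (0 : ℝ) 1 → s i ≤ s j := by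
    intro i j hi hj
    by_contra! hlt
    have hij : i ≠ j := by rintro rfl; exact lt_irrefl _ hlt
    obtain ⟨c, hc⟩ := exists_pair_update L s hij
    have bound : ∀ u ∈ Set.Icc (0 : ℝ) 1, ∀ v ∈ Set.Icc (0 : ℝ) 1, u + v = s i + s j →
        c * (u * v - s i * s j) ≤ 0 := by
      intro u hu v hv huv
      have := hsmax _ (update_pair_mem_meanSlice hs hij hu hv huv)
      rw [hc u v huv] at this
      linarith
    set a := (s i + s j) / 2 with ha
    have hmem : a ∈ Set.Icc (0 : ℝ) 1 := ⟨by linarith [hi.1, hj.1], by linarith [hi.2, hj.2]⟩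
    have hsum : a + a = s i + s j := by ring
    have hc_nonpos : c ≤ 0 := by
      have h := bound a hmem a hmem hsum
      have : 0 < a * a - s i * s j := by
        have : a * a - s i * s j = ((s i - s j) / 2) ^ 2 := by rw [ha]; ring
        rw [this]
        have := sub_pos.2 hlt
        positivity
      exact nonpos_of_mul_nonpos_left h this
    have hc_nonneg : 0 ≤ c := by
      set ε := min (1 - s i) (s j) with hε
      have hε0 : 0 < ε := lt_min (by linarith [hi.2]) hj.1
      have hε1 : ε ≤ 1 - s i := min_le_left _ _
      have hε2 : ε ≤ s j := min_le_right _ _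
      have h := bound (s i + ε) ⟨by linarith [hi.1], by linarith⟩ (s j - ε)
        ⟨by linarith, by linarith [hj.2]⟩ (by ring)
      have : (s i + ε) * (s j - ε) - s i * s j < 0 := by nlinarith
      exact nonneg_of_mul_nonpos_left h this
    have hc0 : c = 0 := le_antisymm hc_nonpos hc_nonneg
    have h := hsmin (a := Function.update (Function.update s i a) j a)
      ⟨update_pair_mem_meanSlice hs hij hmem hmem hsum, by
        simp only [Set.mem_ofPred_eq]
        rw [hc a a hsum, hc0, zero_mul, add_zero]; exact hsr⟩
    simp only [Set.mem_ofPred_eq, sum_sq_update_pair s hij] at h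
    have : a ^ 2 + a ^ 2 - s i ^ 2 - s j ^ 2 = -((s i - s j) ^ 2 / 2) := by rw [ha]; ring
    linarith [pow_pos (sub_pos.2 hlt) 2]
  refine ⟨s, hs, hsmax t ht, ?_⟩
  by_cases hint : ∃ i, s i ∈ Set.Ioo (0 : ℝ) 1
  · obtain ⟨i, hi⟩ := hint
    refine ⟨s i, hs.1 i, fun j => ?_⟩
    rcases (hs.1 j).1.eq_or_lt with h0 | h0
    · exact Or.inl h0.symm
    rcases (hs.1 j).2.eq_or_lt with h1 | h1
    · exact Or.inr (Or.inl h1)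
    exact Or.inr (Or.inr (le_antisymm (heq j i ⟨h0, h1⟩ hi) (heq i j hi ⟨h0, h1⟩)))
  · refine ⟨0, by simp, fun j => ?_⟩
    rcases (hs.1 j).1.eq_or_lt with h0 | h0
    · exact Or.inl h0.symm
    rcases (hs.1 j).2.eq_or_lt with h1 | h1
    · exact Or.inr (Or.inl h1)
    exact absurd ⟨j, h0, h1⟩ hint

lemma exists_prod_eq_X_pow_mul {ι : Type*} (S : Finset ι) (s : ι → ℝ) (θ : ℝ)
    (hs : ∀ i, s i = 0 ∨ s i = 1 ∨ s i = θ) :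
    ∃ l m : ℕ, ∏ i ∈ S, (C (1 - s i) + C (s i) * X) = X ^ l * (C (1 - θ) + C θ * X) ^ m ∧
      ∑ i ∈ S, s i = l + m * θ := by
  classical
  induction S using Finset.induction_on with
  | empty => exact ⟨0, 0, by simp, by simp⟩
  | insert i S hi ih =>
    obtain ⟨l, m, h1, h2⟩ := ih
    rw [Finset.prod_insert hi, Finset.sum_insert hi, h1, h2]
    rcases hs i with h | h | h
    · exact ⟨l, m, by simp [h], by simp [h]⟩
    · exact ⟨l + 1, m, by simp [h]; ring, by rw [h]; push_cast; ring⟩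
    · exact ⟨l, m + 1, by rw [h]; ring, by rw [h]; push_cast; ring⟩

lemma coeff_C_add_C_mul_X_pow (a b : ℝ) (m k : ℕ) :
    ((C a + C b * X) ^ m).coeff k = a ^ (m - k) * b ^ k * m.choose k := by
  have h : (C a + C b * X : ℝ[X]) ^ m = ((X + C a) ^ m).comp (C b * X) := by
    simp [add_comm]
  rw [h, comp_C_mul_X_coeff, coeff_X_add_C_pow]
  ring

lemma binomial_coeff_succ_le {θ : ℝ} (hθ : θ ∈ Set.Icc (0 : ℝ) 1) {m j : ℕ} (h : m * θ ≤ j) :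
    (j + 1 : ℝ) * ((C (1 - θ) + C θ * X) ^ m).coeff (j + 1) ≤
      j * ((C (1 - θ) + C θ * X) ^ m).coeff j := by
  simp only [coeff_C_add_C_mul_X_pow]
  have h1 : 0 ≤ 1 - θ := by linarith [hθ.2]
  have h0 := hθ.1
  rcases Nat.lt_or_ge j m with hjm | hjm
  · obtain ⟨r, rfl⟩ := Nat.exists_eq_add_of_lt hjm
    have e1 : j + r + 1 - (j + 1) = r := by omega
    have e2 : j + r + 1 - j = r + 1 := by omega
    have hch : ((j + r + 1).choose (j + 1) : ℝ) * (j + 1) = (j + r + 1).choose j * (r + 1) := by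
      have := Nat.choose_succ_right_eq (j + r + 1) j
      rw [e2] at this
      exact_mod_cast this
    rw [e1, e2]
    have key : (r + 1 : ℝ) * θ ≤ j * (1 - θ) := by push_cast at h; linarith
    calc (j + 1 : ℝ) * ((1 - θ) ^ r * θ ^ (j + 1) * (j + r + 1).choose (j + 1))
        = ((1 - θ) ^ r * θ ^ j * (j + r + 1).choose j) * ((r + 1) * θ) := by
          linear_combination (1 - θ) ^ r * θ ^ (j + 1) * hch
      _ ≤ ((1 - θ) ^ r * θ ^ j * (j + r + 1).choose j) * (j * (1 - θ)) := by gcongr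
      _ = _ := by ring
  · rw [Nat.choose_eq_zero_of_lt (by omega : m < j + 1)]
    simp only [Nat.cast_zero, mul_zero]
    positivity

lemma X_pow_mul_binomial_coeff_succ_le {θ : ℝ} (hθ : θ ∈ Set.Icc (0 : ℝ) 1) {l m j : ℕ}
    (h : l + m * θ ≤ j) :
    (j + 1 : ℝ) * (X ^ l * (C (1 - θ) + C θ * X) ^ m).coeff (j + 1) ≤
      j * (X ^ l * (C (1 - θ) + C θ * X) ^ m).coeff j := by
  have hlj : l ≤ j := by
    have : (l : ℝ) ≤ j := by nlinarith [mul_nonneg (Nat.cast_nonneg (α := ℝ) m) hθ.1]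
    exact_mod_cast this
  obtain ⟨i, rfl⟩ := Nat.exists_eq_add_of_le hlj
  have e : l + i + 1 = (i + 1) + l := by ring
  rw [e, add_comm l i, coeff_X_pow_mul, coeff_X_pow_mul]
  push_cast at h ⊢
  have hb := binomial_coeff_succ_le hθ (m := m) (j := i) (by linarith)
  have hnonneg : 0 ≤ ((C (1 - θ) + C θ * X) ^ m).coeff i := by
    rw [coeff_C_add_C_mul_X_pow]
    have h1 : 0 ≤ 1 - θ := by linarith [hθ.2]
    have h0 := hθ.1
    positivity
  have hle : ((C (1 - θ) + C θ * X) ^ m).coeff (i + 1) ≤ ((C (1 - θ) + C θ * X) ^ m).coeff i := by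
    have : (0 : ℝ) < i + 1 := by positivity
    refine le_of_mul_le_mul_left ?_ this
    linarith
  nlinarith [mul_le_mul_of_nonneg_left hle (Nat.cast_nonneg (α := ℝ) l)]

lemma bernoulliProd_coeff_succ_le {n : ℕ} {t : Fin n → ℝ} (ht : ∀ i, t i ∈ Set.Icc (0 : ℝ) 1)
    {j : ℕ} (h : ∑ i, t i ≤ j) :
    (j + 1 : ℝ) * (bernoulliProd t).coeff (j + 1) ≤ j * (bernoulliProd t).coeff j := by
  obtain ⟨s, hs, hle, θ, hθ, hsθ⟩ := exists_extremal_means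
    ((j + 1 : ℝ) • lcoeff ℝ (j + 1) - (j : ℝ) • lcoeff ℝ j) (t := t) ⟨ht, rfl⟩
  obtain ⟨l, m, hprod, hsum⟩ := exists_prod_eq_X_pow_mul Finset.univ s θ hsθ
  have hX := X_pow_mul_binomial_coeff_succ_le hθ (l := l) (m := m) (j := j)
    (by rw [← hsum, hs.2]; exact h)
  rw [← hprod] at hX
  change _ ≤ (j : ℝ) * (bernoulliProd s).coeff j at hX
  change _ * (bernoulliProd s).coeff (j + 1) ≤ _ at hX
  simp only [LinearMap.sub_apply, LinearMap.smul_apply, lcoeff_apply, smul_eq_mul] at hle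
  linarith

lemma bernoulliProd_succ {n : ℕ} (t : Fin (n + 1) → ℝ) :
    bernoulliProd t = (C (1 - t 0) + C (t 0) * X) * bernoulliProd (fun i => t i.succ) :=
  Fin.prod_univ_succ _

lemma natDegree_bernoulliProd_le {n : ℕ} (t : Fin n → ℝ) : (bernoulliProd t).natDegree ≤ n := by
  refine (natDegree_prod_le _ _).trans ?_
  refine (Finset.sum_le_card_nsmul _ _ 1 fun i _ => ?_).trans_eq (by simp)
  rw [add_comm]
  exact natDegree_linear_le

lemma reflect_bernoulliProd {n : ℕ} (t : Fin n → ℝ) :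
    (bernoulliProd t).reflect n = bernoulliProd (fun i => 1 - t i) := by
  induction n with
  | zero => simp [bernoulliProd]
  | succ n ih =>
    rw [bernoulliProd_succ, bernoulliProd_succ, mul_comm, reflect_mul _ _
      (natDegree_bernoulliProd_le _) (by rw [add_comm]; exact natDegree_linear_le), ih, mul_comm]
    congr 1
    rw [reflect_add, reflect_C_mul, reflect_one_X, reflect_C]
    simp only [pow_one, mul_one, sub_sub_cancel]
    ring

lemma eval_one_bernoulliProd {n : ℕ} (t : Fin n → ℝ) : (bernoulliProd t).eval 1 = 1 := by
  simp [bernoulliProd, eval_prod]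

lemma eval_one_derivative_bernoulliProd {n : ℕ} (t : Fin n → ℝ) :
    (derivative (bernoulliProd t)).eval 1 = ∑ i, t i := by
  rw [bernoulliProd, derivative_prod_finset, eval_finsetSum]
  simp [eval_prod]

/-- A mode of a Poisson binomial distribution is less than one above the mean. -/
lemma mode_lt_sum_add_one {n : ℕ} {t : Fin n → ℝ} (ht : ∀ i, t i ∈ Set.Icc (0 : ℝ) 1) {M : ℕ}
    (hpos : 0 < (bernoulliProd t).coeff M)
    (hM : ∀ k, (bernoulliProd t).coeff k ≤ (bernoulliProd t).coeff M) :
    (M : ℝ) < ∑ i, t i + 1 := by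
  by_contra! h
  cases M with
  | zero =>
    have : 0 ≤ ∑ i, t i := Finset.sum_nonneg fun i _ => (ht i).1
    simp only [Nat.cast_zero] at h
    linarith
  | succ j =>
    push_cast at h
    have h1 := bernoulliProd_coeff_succ_le ht (j := j) (by linarith)
    have h2 := mul_le_mul_of_nonneg_left (hM j) (Nat.cast_nonneg (α := ℝ) j)
    linarith

lemma abs_mode_sub_sum_lt_one {n : ℕ} {t : Fin n → ℝ} (ht : ∀ i, t i ∈ Set.Icc (0 : ℝ) 1) {M : ℕ}
    (hpos : 0 < (bernoulliProd t).coeff M)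
    (hM : ∀ k, (bernoulliProd t).coeff k ≤ (bernoulliProd t).coeff M) :
    |(M : ℝ) - ∑ i, t i| < 1 := by
  have hMn : M ≤ n := (le_natDegree_of_ne_zero hpos.ne').trans (natDegree_bernoulliProd_le t)
  have hcoeff : ∀ k, (bernoulliProd (fun i => 1 - t i)).coeff k =
      (bernoulliProd t).coeff (revAt n k) := fun k => by
    rw [← reflect_bernoulliProd, coeff_reflect]
  have hcoeffM : (bernoulliProd (fun i => 1 - t i)).coeff (n - M) = (bernoulliProd t).coeff M := by
    rw [hcoeff, revAt_le (Nat.sub_le n M), Nat.sub_sub_self hMn]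
  have h1 := mode_lt_sum_add_one ht hpos hM
  have h2 := mode_lt_sum_add_one (t := fun i => 1 - t i) (M := n - M)
    (fun i => ⟨by linarith [(ht i).2], by linarith [(ht i).1]⟩) (hcoeffM ▸ hpos)
    (fun k => by rw [hcoeffM, hcoeff]; exact hM _)
  rw [Nat.cast_sub hMn, Finset.sum_sub_distrib] at h2
  simp only [Finset.sum_const, Finset.card_univ, Fintype.card_fin, nsmul_eq_mul, mul_one] at h2
  rw [abs_lt]
  constructor <;> linarith

/-- A nonnegative log-concave sequence without internal zeros. -/
def IsPF2 (a : ℕ → ℝ) : Prop :=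
  (∀ i, 0 ≤ a i) ∧ ∀ i j, i ≤ j → a i * a (j + 1) ≤ a (i + 1) * a j

lemma IsPF2.linear_mul {P : ℝ[X]} (h : IsPF2 P.coeff) {q r : ℝ} (hq : 0 ≤ q) (hr : 0 ≤ r) :
    IsPF2 ((C q + C r * X) * P).coeff := by
  obtain ⟨h0, h1⟩ := h
  have hzero : ((C q + C r * X) * P).coeff 0 = q * P.coeff 0 := by simp [add_mul, mul_assoc]
  have hsucc : ∀ k, ((C q + C r * X) * P).coeff (k + 1) =
      q * P.coeff (k + 1) + r * P.coeff k := by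
    intro k; simp [add_mul, mul_assoc, coeff_X_mul]
  refine ⟨fun i => ?_, fun i j hij => ?_⟩
  · have := h0 0
    cases i with
    | zero => rw [hzero]; positivity
    | succ k =>
      have := h0 k
      have := h0 (k + 1)
      rw [hsucc]; positivity
  · rcases hij.eq_or_lt with rfl | hlt
    · rw [mul_comm]
    obtain ⟨m, rfl⟩ := Nat.exists_eq_add_of_lt hlt
    cases i with
    | zero =>
      simp only [zero_add] at *
      rw [hzero, hsucc, hsucc, hsucc]
      have e1 := h1 0 (m + 1) (by omega)
      have p1 := mul_le_mul_of_nonneg_left e1 (mul_nonneg hq hq)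
      have p2 := mul_nonneg (mul_nonneg hr hq) (mul_nonneg (h0 1) (h0 m))
      have p3 := mul_nonneg (mul_nonneg hr hr) (mul_nonneg (h0 0) (h0 m))
      simp only [zero_add] at *
      nlinarith
    | succ i =>
      have e0 : i + 1 + m + 1 = i + m + 1 + 1 := by ring
      rw [e0, hsucc, hsucc, hsucc, hsucc]
      have e1 := h1 (i + 1) (i + m + 1 + 1) (by omega)
      have e2 := h1 i (i + m + 1) (by omega)
      have e3 := h1 i (i + m + 1 + 1) (by omega)
      have e4 := h1 (i + 1) (i + m + 1) (by omega)
      have p1 := mul_le_mul_of_nonneg_left e1 (mul_nonneg hq hq)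
      have p2 := mul_le_mul_of_nonneg_left e2 (mul_nonneg hr hr)
      have p3 := mul_le_mul_of_nonneg_left (e3.trans e4) (mul_nonneg hq hr)
      linarith

lemma isPF2_bernoulliProd {n : ℕ} {t : Fin n → ℝ} (ht : ∀ i, t i ∈ Set.Icc (0 : ℝ) 1) :
    IsPF2 (bernoulliProd t).coeff := by
  induction n with
  | zero =>
    simp only [bernoulliProd, Finset.univ_eq_empty, Finset.prod_empty]
    refine ⟨fun i => ?_, fun i j _ => ?_⟩
    · rw [coeff_one]; split_ifs <;> norm_num
    · simp [coeff_one]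
  | succ n ih =>
    rw [bernoulliProd_succ]
    exact (ih fun i => ht i.succ).linear_mul (by linarith [(ht 0).2]) (ht 0).1

lemma IsPF2.le_succ_of_lt_mode {a : ℕ → ℝ} (h : IsPF2 a) {m i : ℕ} (hm : ∀ k, a k ≤ a m)
    (him : i < m) : a i ≤ a (i + 1) := by
  by_contra! hlt
  have hi : 0 < a i := (h.1 _).trans_lt hlt
  have hanti : ∀ j, i + 1 ≤ j → a j ≤ a (i + 1) := by
    intro j hj
    induction j, hj using Nat.le_induction with
    | base => exact le_rfl
    | succ j hj ih =>
      refine le_trans ?_ ih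
      refine le_of_mul_le_mul_left ((h.2 i j (by omega)).trans ?_) hi
      exact mul_le_mul_of_nonneg_right hlt.le (h.1 j)
  linarith [hanti m him, hm i]

lemma IsPF2.succ_le_of_mode_le {a : ℕ → ℝ} (h : IsPF2 a) {m i : ℕ} (hm : ∀ k, a k ≤ a m)
    (hmi : m ≤ i) : a (i + 1) ≤ a i := by
  by_contra! hlt
  have hi : 0 < a (i + 1) := (h.1 _).trans_lt hlt
  have hmono : a m ≤ a i := by
    induction hmi using Nat.decreasingInduction with
    | self => exact le_rfl
    | of_succ j hj ih =>
      have hstep : a j ≤ a (j + 1) := by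
        refine le_of_mul_le_mul_right ((h.2 j i hj.le).trans ?_) hi
        exact mul_le_mul_of_nonneg_left hlt.le (h.1 _)
      exact hstep.trans (ih fun k => (hm k).trans hstep)
  linarith [hm (i + 1)]

lemma exists_prod_X_sub_C_eq (R : Multiset ℝ) (hR : ∀ r ∈ R, r ≤ 0) :
    ∃ (d : ℕ) (t : Fin d → ℝ) (c : ℝ), (∀ i, t i ∈ Set.Icc (0 : ℝ) 1) ∧
      (R.map fun r => X - C r).prod = C c * bernoulliProd t := by
  induction R using Multiset.induction_on with
  | empty => exact ⟨0, Fin.elim0, 1, fun i => i.elim0, by simp [bernoulliProd]⟩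
  | cons r R ih =>
    obtain ⟨d, t, c, ht, hprod⟩ := ih fun s hs => hR s (Multiset.mem_cons_of_mem hs)
    have hr : r ≤ 0 := hR r (Multiset.mem_cons_self r R)
    have h1 : 0 < 1 - r := by linarith
    refine ⟨d + 1, Fin.cons (1 - r)⁻¹ t, (1 - r) * c, ?_, ?_⟩
    · refine Fin.cases ?_ fun i => ?_
      · exact ⟨by simpa using h1.le, by simpa using inv_le_one_of_one_le₀ (by linarith)⟩
      · simpa using ht i
    · rw [Multiset.map_cons, Multiset.prod_cons, hprod, bernoulliProd_succ]
      simp only [Fin.cons_zero, Fin.cons_succ]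
      have hlin : (X - C r : ℝ[X]) = C (1 - r) * (C (1 - (1 - r)⁻¹) + C (1 - r)⁻¹ * X) := by
        rw [mul_add, ← mul_assoc, ← C_mul, ← C_mul, mul_inv_cancel₀ h1.ne', mul_sub,
          mul_inv_cancel₀ h1.ne']
        simp only [mul_one, map_sub, map_one]
        ring
      rw [hlin, C_mul]
      ring

/-- A real-rooted polynomial with nonnegative coefficients and positive value at `1` is a positive
multiple of the generating polynomial of a sum of independent Bernoulli variables. -/
lemma exists_eq_C_mul_bernoulliProd {p : ℝ[X]} (hcoeff : ∀ k, 0 ≤ p.coeff k)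
    (hreal : ∀ z : ℂ, (p.map (algebraMap ℝ ℂ)).eval z = 0 → z.im = 0) (hpos : 0 < p.eval 1) :
    ∃ (d : ℕ) (t : Fin d → ℝ) (c : ℝ), (∀ i, t i ∈ Set.Icc (0 : ℝ) 1) ∧ 0 < c ∧
      p = C c * bernoulliProd t := by
  have hp0 : p ≠ 0 := by rintro rfl; simp at hpos
  have hsplits : p.Splits := by
    refine Splits.of_splits_map (algebraMap ℝ ℂ) (IsAlgClosed.splits _) fun z hz => ?_
    exact ⟨z.re, Complex.ext rfl (hreal z (isRoot_of_mem_roots hz)).symm⟩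
  have hroots : ∀ r ∈ p.roots, r ≤ 0 := by
    intro r hr
    by_contra! hr0
    have hroot : p.eval r = 0 := isRoot_of_mem_roots hr
    rw [eval_eq_sum_range, Finset.sum_eq_zero_iff_of_nonneg
      fun k _ => mul_nonneg (hcoeff k) (by positivity)] at hroot
    have := hroot p.natDegree (by simp)
    rw [mul_eq_zero, coeff_natDegree, leadingCoeff_eq_zero] at this
    exact this.elim hp0 (pow_pos hr0 _).ne'
  obtain ⟨d, t, c, ht, hprod⟩ := exists_prod_X_sub_C_eq p.roots hroots
  have hp : p = C (p.leadingCoeff * c) * bernoulliProd t := by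
    rw [C_mul, mul_assoc, ← hprod]
    exact hsplits.eq_prod_roots
  refine ⟨d, t, p.leadingCoeff * c, ht, ?_, hp⟩
  rw [hp, eval_mul, eval_C, eval_one_bernoulliProd, mul_one] at hpos
  exact hpos

/-- (Darroch) If `a 0, …, a n` are nonnegative reals such that the polynomial
`p(x) = a 0 + a 1 x + ⋯ + a n xⁿ` has only real zeros and `p(1) > 0`, then the
sequence is unimodal, and every index `M ≤ n` at which `a M` is maximal satisfies
`|M - p'(1)/p(1)| < 1`. -/
theorem darroch
    (n : ℕ) (a : ℕ → ℝ) (ha : ∀ k ≤ n, 0 ≤ a k)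
    (p : Polynomial ℝ)
    (hp : p = ∑ k ∈ Finset.range (n + 1), Polynomial.C (a k) * Polynomial.X ^ k)
    (hreal : ∀ z : ℂ, (p.map (algebraMap ℝ ℂ)).eval z = 0 → z.im = 0)
    (hpos : 0 < p.eval 1) :
    (∃ m ≤ n, (∀ i j, i ≤ j → j ≤ m → a i ≤ a j) ∧
      (∀ i j, m ≤ i → i ≤ j → j ≤ n → a j ≤ a i)) ∧
    (∀ M ≤ n, (∀ k ≤ n, a k ≤ a M) →
      |(M : ℝ) - (Polynomial.derivative p).eval 1 / p.eval 1| < 1) := by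
  have hcoeff : ∀ k, p.coeff k = if k ≤ n then a k else 0 := by
    intro k
    rw [hp, finsetSum_coeff]
    simp only [coeff_C_mul_X_pow]
    rw [Finset.sum_ite_eq]
    simp
  have hcoeff_le : ∀ k ≤ n, p.coeff k = a k := fun k hk => by rw [hcoeff, if_pos hk]
  have hnonneg : ∀ k, 0 ≤ p.coeff k := by
    intro k
    rw [hcoeff]
    split_ifs with hk
    exacts [ha k hk, le_rfl]
  obtain ⟨d, t, c, ht, hc, hpt⟩ := exists_eq_C_mul_bernoulliProd hnonneg hreal hpos
  have hcoeff_t : ∀ k, p.coeff k = c * (bernoulliProd t).coeff k := fun k => by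
    rw [hpt, coeff_C_mul]
  have hmode : ∀ M ≤ n, (∀ k ≤ n, a k ≤ a M) →
      ∀ k, (bernoulliProd t).coeff k ≤ (bernoulliProd t).coeff M := by
    intro M hMn hM k
    refine le_of_mul_le_mul_left ?_ hc
    rw [← hcoeff_t, ← hcoeff_t, hcoeff_le M hMn, hcoeff]
    split_ifs with hk
    exacts [hM k hk, ha M hMn]
  have hle : ∀ i j, i ≤ n → j ≤ n → (bernoulliProd t).coeff i ≤ (bernoulliProd t).coeff j →
      a i ≤ a j := by
    intro i j hi hj h
    rw [← hcoeff_le i hi, ← hcoeff_le j hj, hcoeff_t, hcoeff_t]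
    exact mul_le_mul_of_nonneg_left h hc.le
  have hPF := isPF2_bernoulliProd ht
  constructor
  · obtain ⟨m, hm, hmax⟩ := Finset.exists_max_image (Finset.range (n + 1)) a ⟨0, by simp⟩
    have hmn : m ≤ n := Nat.lt_succ_iff.1 (Finset.mem_range.1 hm)
    have hmt := hmode m hmn fun k hk => hmax k (by simpa [Nat.lt_succ_iff] using hk)
    refine ⟨m, hmn, fun i j hij hjm => ?_, fun i j hmi hij hjn => ?_⟩
    · refine hle i j (by omega) (by omega) ?_
      induction j, hij using Nat.le_induction with
      | base => exact le_rfl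
      | succ j hij ih => exact (ih (by omega)).trans (hPF.le_succ_of_lt_mode hmt (by omega))
    · refine hle j i (by omega) (by omega) ?_
      induction j, hij using Nat.le_induction with
      | base => exact le_rfl
      | succ j hij ih => exact (hPF.succ_le_of_mode_le hmt (by omega)).trans (ih (by omega))
  · intro M hMn hM
    have hMt := hmode M hMn hM
    have hMpos : 0 < (bernoulliProd t).coeff M := by
      by_contra! h
      have hzero : bernoulliProd t = 0 := by
        ext k
        exact le_antisymm ((hMt k).trans h) (hPF.1 k)
      have := eval_one_bernoulliProd t
      simp [hzero] at this
    have hmean : (derivative p).eval 1 / p.eval 1 = ∑ i, t i := by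
      rw [hpt, derivative_C_mul, eval_mul, eval_mul, eval_C, eval_one_bernoulliProd,
        eval_one_derivative_bernoulliProd, mul_one, mul_div_cancel_left₀ _ hc.ne']
    rw [hmean]
    exact abs_mode_sub_sum_lt_one ht hMpos hMt
end

section
/- For every r ≥ 0, every n ≥ 2 and every k with 2 ≤ k ≤ n - 1, the ordered r-Stirling numbers satisfy the strict log-concavity inequality OS_r(n,k)^2 > OS_r(n,k-1) · OS_r(n,k+1). -/
open Polynomial

/-- The ordered `r`-Stirling number `(k+r)! · S_r(n,k)`: the number of surjections
`f : Fin (r+n) → Fin (r+k)` whose restriction to the first `r` elements is injective. -/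
def OS (r n k : ℕ) : ℕ :=
  Fintype.card {f : Fin (r + n) → Fin (r + k) //
    Function.Surjective f ∧ Function.Injective (fun i : Fin r => f (Fin.castAdd n i))}

/-- The `r`-Fubini polynomial `F_{n,r}(x) = ∑_{k=1}^n OS_r(n,k) xᵏ` for `n ≥ 1`,
with `F_{0,r}(x) = r!`. -/
noncomputable def rFubiniPoly (r n : ℕ) : Polynomial ℝ :=
  if n = 0 then Polynomial.C (r.factorial : ℝ)
  else ∑ k ∈ Finset.Icc 1 n, Polynomial.C ((OS r n k : ℝ)) * Polynomial.X ^ k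

/-- Removing the last element of the domain: a counted map either stays surjective, or it misses
exactly the value of the removed element. -/
theorem OS_succ_succ (r n k : ℕ) :
    OS r (n + 1) (k + 1) = (r + (k + 1)) * (OS r n (k + 1) + OS r n k) := by
  have key : Fintype.card (Fin (r + (k + 1)) ×
      ({f : Fin (r + n) → Fin (r + (k + 1)) //
        Function.Surjective f ∧ Function.Injective (fun i : Fin r => f (Fin.castAdd n i))} ⊕
       {f : Fin (r + n) → Fin (r + k) //
        Function.Surjective f ∧ Function.Injective (fun i : Fin r => f (Fin.castAdd n i))})) =
      OS r (n + 1) (k + 1) := by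
    refine Fintype.card_of_bijective (f := fun p => match p with
      | (v, Sum.inl g) => ⟨Fin.snoc (α := fun _ => Fin (r + (k + 1))) g.1 v, ?_, ?_⟩
      | (v, Sum.inr h) => ⟨Fin.snoc (α := fun _ => Fin (r + (k + 1)))
          (fun i => Fin.succAbove (n := r + k) v (h.1 i)) v, ?_, ?_⟩) ⟨?_, ?_⟩
    · intro y
      obtain ⟨x, hx⟩ := g.2.1 y
      exact ⟨Fin.castSucc x, by rw [Fin.snoc_castSucc, hx]⟩
    · intro i j hij
      apply g.2.2
      change Fin.snoc (α := fun _ => Fin (r + (k + 1))) g.1 v (Fin.castSucc (Fin.castAdd n i)) =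
        Fin.snoc (α := fun _ => Fin (r + (k + 1))) g.1 v (Fin.castSucc (Fin.castAdd n j)) at hij
      simpa only [Fin.snoc_castSucc] using hij
    · intro y
      by_cases hy : y = v
      · exact ⟨Fin.last _, by rw [Fin.snoc_last, hy]⟩
      · obtain ⟨z, hz⟩ := Fin.exists_succAbove_eq (n := r + k) hy
        obtain ⟨x, hx⟩ := h.2.1 z
        exact ⟨Fin.castSucc x, by rw [Fin.snoc_castSucc, hx, hz]⟩
    · intro i j hij
      apply h.2.2
      change Fin.snoc (α := fun _ => Fin (r + (k + 1)))
          (fun i => Fin.succAbove (n := r + k) v (h.1 i)) v (Fin.castSucc (Fin.castAdd n i)) =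
        Fin.snoc (α := fun _ => Fin (r + (k + 1)))
          (fun i => Fin.succAbove (n := r + k) v (h.1 i)) v (Fin.castSucc (Fin.castAdd n j)) at hij
      simp only [Fin.snoc_castSucc] at hij
      exact Fin.succAbove_right_injective hij
    · have not_surj : ∀ (v : Fin (r + k + 1)) (h : Fin (r + n) → Fin (r + k)),
          ¬ Function.Surjective (fun i => v.succAbove (h i)) := by
        intro v h hs
        obtain ⟨x, hx⟩ := hs v
        exact Fin.succAbove_ne _ _ hx
      have snoc_inj : ∀ (g h : Fin (r + n) → Fin (r + (k + 1))) (v w : Fin (r + (k + 1))),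
          Fin.snoc (α := fun _ => Fin (r + (k + 1))) g v =
            Fin.snoc (α := fun _ => Fin (r + (k + 1))) h w → g = h ∧ v = w :=
        fun _ _ _ _ e => Fin.snoc_injective2 e
      rintro ⟨v, g | g⟩ ⟨w, h | h⟩ e
      · obtain ⟨e₁, rfl⟩ := snoc_inj g.1 h.1 v w (congrArg Subtype.val e)
        rw [Subtype.ext e₁]
      · obtain ⟨e₁, -⟩ := snoc_inj g.1 (fun i => Fin.succAbove (n := r + k) w (h.1 i)) v w
          (congrArg Subtype.val e)
        exact absurd (e₁ ▸ g.2.1) (not_surj _ _)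
      · obtain ⟨e₁, -⟩ := snoc_inj (fun i => Fin.succAbove (n := r + k) v (g.1 i)) h.1 v w
          (congrArg Subtype.val e)
        exact absurd (e₁ ▸ h.2.1) (not_surj _ _)
      · obtain ⟨e₁, rfl⟩ := snoc_inj (fun i => Fin.succAbove (n := r + k) v (g.1 i))
          (fun i => Fin.succAbove (n := r + k) w (h.1 i)) v w (congrArg Subtype.val e)
        have : g = h := Subtype.ext (funext fun i =>
          Fin.succAbove_right_injective (congrFun e₁ i))
        rw [this]
    · rintro ⟨f, hs, hi⟩
      by_cases hf : Function.Surjective (fun i : Fin (r + n) => f (Fin.castSucc i))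
      · refine ⟨(f (Fin.last _), Sum.inl ⟨_, hf, hi⟩), Subtype.ext ?_⟩
        exact Fin.snoc_init_self (α := fun _ => Fin (r + (k + 1))) f
      · have miss : ∀ y, (∀ i : Fin (r + n), f (Fin.castSucc i) ≠ y) →
            f (Fin.last (r + n)) = y := by
          intro y hy
          obtain ⟨x, hx⟩ := hs y
          induction x using Fin.lastCases with
          | last => exact hx
          | cast i => exact absurd hx (hy i)
        have hne : ∀ i : Fin (r + n), f (Fin.castSucc i) ≠ f (Fin.last (r + n)) := by
          unfold Function.Surjective at hf
          push Not at hf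
          obtain ⟨y, hy⟩ := hf
          rwa [miss y hy]
        choose h hh using fun i => Fin.exists_succAbove_eq (n := r + k) (hne i)
        refine ⟨(f (Fin.last _), Sum.inr ⟨h, ?_, ?_⟩), Subtype.ext ?_⟩
        · intro z
          by_contra hz
          push Not at hz
          refine Fin.succAbove_ne (n := r + k) (f (Fin.last (r + n))) z (miss _ ?_).symm
          intro i hi'
          rw [← hh] at hi'
          exact hz i (Fin.succAbove_right_injective hi')
        · intro i j hij
          apply hi
          change f (Fin.castSucc (Fin.castAdd n i)) = f (Fin.castSucc (Fin.castAdd n j))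
          rw [← hh, ← hh]
          exact congrArg _ hij
        · refine Eq.trans ?_ (Fin.snoc_init_self (n := r + n) (α := fun _ => Fin (r + (k + 1))) f)
          exact congrArg
            (fun g => Fin.snoc (α := fun _ => Fin (r + (k + 1))) g (f (Fin.last (r + n))))
            (funext hh)
  rw [← key, Fintype.card_prod, Fintype.card_sum, Fintype.card_fin]
  rfl

theorem OS_succ_zero (r n : ℕ) : OS r (n + 1) 0 = r * OS r n 0 := by
  have surj : ∀ (m : ℕ) (f : Fin (r + m) → Fin (r + 0)),
      Function.Injective (fun i : Fin r => f (Fin.castAdd m i)) → Function.Surjective f := by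
    intro m f hf
    exact (Finite.surjective_of_injective (α := Fin r) hf).of_comp (g := Fin.castAdd m)
  have key : Fintype.card (Fin (r + 0) × {f : Fin (r + n) → Fin (r + 0) //
        Function.Surjective f ∧ Function.Injective (fun i : Fin r => f (Fin.castAdd n i))}) =
      OS r (n + 1) 0 := by
    have inj : ∀ (v : Fin (r + 0)) (g : Fin (r + n) → Fin (r + 0)),
        Function.Injective (fun i : Fin r => g (Fin.castAdd n i)) →
        Function.Injective (fun i : Fin r =>
          Fin.snoc (α := fun _ => Fin (r + 0)) g v (Fin.castAdd (n + 1) i)) := by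
      intro v g hg i j hij
      apply hg
      change Fin.snoc (α := fun _ => Fin (r + 0)) g v (Fin.castSucc (Fin.castAdd n i)) =
        Fin.snoc (α := fun _ => Fin (r + 0)) g v (Fin.castSucc (Fin.castAdd n j)) at hij
      simpa only [Fin.snoc_castSucc] using hij
    refine Fintype.card_of_bijective (f := fun p =>
      ⟨Fin.snoc (α := fun _ => Fin (r + 0)) p.2.1 p.1,
        surj (n + 1) _ (inj _ _ p.2.2.2), inj _ _ p.2.2.2⟩) ⟨?_, ?_⟩
    · rintro ⟨v, g⟩ ⟨w, h⟩ e
      obtain ⟨e₁, e₂⟩ := Fin.snoc_injective2 (n := r + n)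
        (α := fun _ => Fin (r + 0)) (congrArg Subtype.val e)
      exact Prod.ext e₂ (Subtype.ext e₁)
    · rintro ⟨f, hs, hi⟩
      refine ⟨(f (Fin.last _), ⟨fun i : Fin (r + n) => f (Fin.castSucc i),
        surj n _ hi, hi⟩), Subtype.ext ?_⟩
      exact Fin.snoc_init_self (α := fun _ => Fin (r + 0)) f
  rw [← key, Fintype.card_prod, Fintype.card_fin]
  rfl

theorem OS_eq_zero_of_lt {r n k : ℕ} (h : n < k) : OS r n k = 0 := by
  refine Fintype.card_eq_zero_iff.2 ⟨fun f => ?_⟩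
  have := Fintype.card_le_of_surjective _ f.2.1
  simp only [Fintype.card_fin] at this
  omega

theorem OS_zero_zero_pos (r : ℕ) : 0 < OS r 0 0 :=
  Fintype.card_pos_iff.2 ⟨⟨id, Function.surjective_id, fun _ _ h => Fin.castAdd_injective r 0 h⟩⟩

theorem OS_succ_pos (r : ℕ) {n k : ℕ} (h : k < n) : 0 < OS r n (k + 1) := by
  induction n generalizing k with
  | zero => omega
  | succ n ih =>
    rw [OS_succ_succ]
    refine Nat.mul_pos (by omega) ?_
    rcases k with _ | k
    · rcases n with _ | n
      · exact Nat.add_pos_right _ (OS_zero_zero_pos r)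
      · exact Nat.add_pos_left (ih (by omega)) _
    · exact Nat.add_pos_right _ (ih (by omega))

/-- Log-concavity across a gap of three, given log-concavity at the two positive middle terms. -/
theorem mul_le_mul_of_log_concave {a b c d : ℕ} (hb : 0 < b) (hc : 0 < c)
    (h₁ : a * c ≤ b ^ 2) (h₂ : b * d ≤ c ^ 2) : a * d ≤ b * c := by
  refine Nat.le_of_mul_le_mul_left ?_ (Nat.mul_pos hb hc)
  calc b * c * (a * d) = (a * c) * (b * d) := by ring
    _ ≤ b ^ 2 * c ^ 2 := Nat.mul_le_mul h₁ h₂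
    _ = b * c * (b * c) := by ring

/-- Sums of consecutive terms of a log-concave sequence are log-concave. -/
theorem add_mul_add_le_sq {a b c d : ℕ} (h₁ : a * c ≤ b ^ 2) (h₂ : b * d ≤ c ^ 2)
    (h₃ : a * d ≤ b * c) : (b + a) * (d + c) ≤ (c + b) ^ 2 := by
  nlinarith

theorem OS_add_mul_add_le_sq {r n k : ℕ}
    (h : ∀ k, OS r n k * OS r n (k + 2) ≤ OS r n (k + 1) ^ 2) :
    (OS r n (k + 1) + OS r n k) * (OS r n (k + 3) + OS r n (k + 2)) ≤
      (OS r n (k + 2) + OS r n (k + 1)) ^ 2 := by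
  refine add_mul_add_le_sq (h k) (h (k + 1)) ?_
  rcases lt_or_ge n (k + 3) with hn | hn
  · simp [OS_eq_zero_of_lt hn]
  · exact mul_le_mul_of_log_concave (OS_succ_pos r (by omega)) (OS_succ_pos r (by omega))
      (h k) (h (k + 1))

theorem OS_log_concave (r n k : ℕ) : OS r n k * OS r n (k + 2) ≤ OS r n (k + 1) ^ 2 := by
  induction n generalizing k with
  | zero => simp [OS_eq_zero_of_lt (show 0 < k + 2 by omega)]
  | succ n ih =>
    rcases k with _ | k
    · rw [OS_succ_zero, OS_succ_succ, OS_succ_succ, mul_pow]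
      have h₁ : r * (r + (1 + 1)) ≤ (r + (0 + 1)) ^ 2 := by nlinarith
      have h₂ : OS r n 0 * (OS r n (1 + 1) + OS r n 1) ≤ (OS r n (0 + 1) + OS r n 0) ^ 2 :=
        by simpa using add_mul_add_le_sq (a := 0) (by simp) (ih 0) (by simp)
      calc _ = (r * (r + (1 + 1))) * (OS r n 0 * (OS r n (1 + 1) + OS r n 1)) := by ring
        _ ≤ _ := Nat.mul_le_mul h₁ h₂
    · rw [OS_succ_succ, OS_succ_succ, OS_succ_succ, mul_pow, mul_mul_mul_comm]
      exact Nat.mul_le_mul (by nlinarith) (OS_add_mul_add_le_sq ih)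

/-- The ordered `r`-Stirling numbers are strictly log-concave:
for `n ≥ 2` and `2 ≤ k ≤ n - 1` we have `OS_r(n,k)² > OS_r(n,k-1)·OS_r(n,k+1)`. -/
theorem ordered_rStirling_strict_log_concave
    (r n k : ℕ) (hn : 2 ≤ n) (hk : 2 ≤ k) (hkn : k ≤ n - 1) :
    OS r n (k - 1) * OS r n (k + 1) < OS r n k ^ 2 := by
  obtain ⟨j, rfl⟩ := Nat.exists_eq_add_of_le' hk
  obtain ⟨m, rfl⟩ := Nat.exists_eq_add_of_le' (show 1 ≤ n by omega)
  change OS r (m + 1) (j + 1) * OS r (m + 1) (j + 2 + 1) < OS r (m + 1) (j + 1 + 1) ^ 2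
  rw [OS_succ_succ, OS_succ_succ, OS_succ_succ, mul_pow, mul_mul_mul_comm]
  have hpos : 0 < OS r m (j + 1 + 1) := OS_succ_pos r (by omega)
  exact Nat.mul_lt_mul_of_lt_of_le (by nlinarith)
    (OS_add_mul_add_le_sq (OS_log_concave r m)) (by positivity)
end

section
/- For every fixed r ≥ 0, the r-Fubini numbers satisfy the asymptotic F_{n,r} ~ (1 / (2·(log 2)^{r+1})) · n! · n^r / (log 2)^n as n → ∞; that is, F_{n,r} · (log 2)^{n+r+1} · 2 / (n! · n^r) tends to 1. -/
open Polynomial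

/-- The `r`-Fubini number `F_{n,r} = ∑_{k=1}^n OS_r(n,k)` for `n ≥ 1`, with `F_{0,r} = r!`. -/
def rFubini (r n : ℕ) : ℕ :=
  if n = 0 then r.factorial else ∑ k ∈ Finset.Icc 1 n, OS r n k

open Filter Topology

/-- The Lipschitz summation formula gives `∑ mᵏ e^{-Lm} ∼ k! / L^{k+1}` as `k → ∞`: only the
pole of the summand nearest to the origin survives. -/
theorem tendsto_tsum_pow_mul_exp_neg_pow {L : ℝ} (hL : 0 < L) :
    Tendsto (fun k : ℕ => (∑' m : ℕ, (m : ℝ) ^ k * Real.exp (-L) ^ m) * L ^ (k + 1) /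
      (k.factorial : ℝ)) atTop (𝓝 1) := by
  have hpi := Real.pi_pos
  have hy : 0 < L / (2 * Real.pi) := by positivity
  obtain ⟨z, hz⟩ : ∃ z : UpperHalfPlane, (z : ℂ) = Complex.I * (L / (2 * Real.pi) : ℝ) :=
    ⟨⟨Complex.I * (L / (2 * Real.pi) : ℝ), by rwa [Complex.I_mul_im, Complex.ofReal_re]⟩, rfl⟩
  have hz0 : (z : ℂ) ≠ 0 := UpperHalfPlane.ne_zero z
  have hzL : -2 * Real.pi * Complex.I * z = L := by
    rw [hz]
    push_cast
    have : (Real.pi : ℂ) ≠ 0 := by exact_mod_cast hpi.ne'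
    field_simp
    simp
  have hexp : Complex.exp (2 * Real.pi * Complex.I * z) = (Real.exp (-L) : ℝ) := by
    rw [show 2 * Real.pi * Complex.I * (z : ℂ) = -(-2 * Real.pi * Complex.I * z) by ring, hzL]
    push_cast
    rfl
  have hnormSq (n : ℤ) : ‖(z : ℂ) + n‖ ^ 2 = ‖(z : ℂ)‖ ^ 2 + (n : ℝ) ^ 2 := by
    simp only [Complex.sq_norm, Complex.normSq_apply, hz, Complex.add_re, Complex.add_im,
      Complex.I_mul_re, Complex.I_mul_im, Complex.ofReal_re, Complex.ofReal_im, Complex.intCast_re,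
      Complex.intCast_im]
    ring
  have hne (n : ℤ) : 0 < ‖(z : ℂ) + n‖ := by
    have := norm_pos_iff.mpr hz0
    have h2 := hnormSq n
    by_contra h
    have h0 : ‖(z : ℂ) + n‖ = 0 := le_antisymm (not_lt.mp h) (norm_nonneg _)
    rw [h0] at h2
    nlinarith [sq_nonneg (n : ℝ)]
  have hle (n : ℤ) : ‖(z : ℂ) / (z + n)‖ ≤ 1 := by
    rw [norm_div, div_le_one (hne n)]
    exact le_of_sq_le_sq (by rw [hnormSq]; nlinarith [sq_nonneg (n : ℝ)]) (norm_nonneg _)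
  have hlt (n : ℤ) (hn : n ≠ 0) : ‖(z : ℂ) / (z + n)‖ < 1 := by
    rw [norm_div, div_lt_one (hne n)]
    have : 0 < (n : ℝ) ^ 2 := by positivity
    exact lt_of_pow_lt_pow_left₀ 2 (norm_nonneg _) (by rw [hnormSq]; linarith)
  have hsummable : Summable fun n : ℤ => ‖(z : ℂ) / (z + n)‖ ^ 2 := by
    have h := (EisensteinSeries.linear_right_summable (z : ℂ) 1 (k := 2) le_rfl).norm.mul_left
      (‖(z : ℂ)‖ ^ 2)
    refine h.congr fun n => ?_
    simp only [Int.cast_one, one_mul, norm_inv, norm_zpow, norm_div, div_pow]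
    rfl
  have hlim : Tendsto (fun k : ℕ => ∑' n : ℤ, ((z : ℂ) / (z + n)) ^ (k + 1)) atTop
      (𝓝 (∑' n : ℤ, if n = 0 then 1 else 0)) := by
    refine tendsto_tsum_of_dominated_convergence hsummable (fun n => ?_) ?_
    · split_ifs with hn
      · subst hn
        simp [hz0]
      · exact (tendsto_pow_atTop_nhds_zero_of_norm_lt_one (hlt n hn)).comp (tendsto_add_atTop_nat 1)
    · filter_upwards [eventually_ge_atTop 1] with k hk n
      rw [norm_pow]
      exact pow_le_pow_of_le_one (norm_nonneg _) (hle n) (by omega)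
  rw [tsum_ite_eq] at hlim
  have key : (fun k : ℕ => ∑' n : ℤ, ((z : ℂ) / (z + n)) ^ (k + 1)) =ᶠ[atTop]
      fun k : ℕ => (((∑' m : ℕ, (m : ℝ) ^ k * Real.exp (-L) ^ m) * L ^ (k + 1) /
        (k.factorial : ℝ) : ℝ) : ℂ) := by
    filter_upwards [eventually_ge_atTop 1] with k hk
    have h := EisensteinSeries.qExpansion_identity hk z
    rw [hexp] at h
    have h2 : ∑' n : ℤ, ((z : ℂ) / (z + n)) ^ (k + 1) =
        (z : ℂ) ^ (k + 1) * ∑' n : ℤ, 1 / ((z : ℂ) + n) ^ (k + 1) := by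
      rw [← tsum_mul_left]
      exact tsum_congr fun n => by rw [div_pow]; ring
    rw [h2, h, ← mul_assoc, ← mul_div_assoc, ← mul_pow, mul_comm (z : ℂ), hzL]
    push_cast
    ring
  have hre := (Complex.continuous_re.tendsto 1).comp (hlim.congr' key)
  simpa only [Function.comp_def, Complex.ofReal_re, Complex.one_re] using hre

theorem summable_descFactorial_mul_pow_mul_pow (r n : ℕ) {q : ℝ} (hq : ‖q‖ < 1) :
    Summable fun m : ℕ => (m.descFactorial r : ℝ) * (m : ℝ) ^ n * q ^ m := by
  refine Summable.of_norm_bounded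
    (summable_pow_mul_geometric_of_norm_lt_one (r + n) (r := ‖q‖) (by simpa using hq)) fun m => ?_
  rw [norm_mul, norm_mul, norm_pow, norm_pow, pow_add]
  simp only [RCLike.norm_natCast]
  gcongr
  exact_mod_cast Nat.descFactorial_le_pow m r

theorem descFactorial_succ_cast (m r : ℕ) :
    (m.descFactorial (r + 1) : ℝ) = ((m : ℝ) - r) * m.descFactorial r := by
  rw [Nat.descFactorial_succ]
  rcases le_or_gt r m with h | h
  · push_cast [Nat.cast_sub h]
    ring
  · simp [Nat.descFactorial_eq_zero_iff_lt.mpr h]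

theorem tendsto_tsum_descFactorial_mul_pow_mul_exp_neg_pow {L : ℝ} (hL : 0 < L) (r : ℕ) :
    Tendsto (fun n : ℕ => (∑' m : ℕ, (m.descFactorial r : ℝ) * (m : ℝ) ^ n * Real.exp (-L) ^ m) *
      L ^ (n + r + 1) / ((n.factorial : ℝ) * (n : ℝ) ^ r)) atTop (𝓝 1) := by
  induction r with
  | zero => simpa using tendsto_tsum_pow_mul_exp_neg_pow hL
  | succ r ih =>
    have hq : ‖Real.exp (-L)‖ < 1 := by simpa using hL
    have hratio : Tendsto (fun n : ℕ => (1 + 1 / (n : ℝ)) ^ (r + 1)) atTop (𝓝 1) := by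
      simpa using (tendsto_one_div_atTop_nhds_zero_nat (𝕜 := ℝ)).const_add 1 |>.pow (r + 1)
    have hmain := ((ih.comp (tendsto_add_atTop_nat 1)).mul hratio).sub
      ((ih.mul (tendsto_one_div_atTop_nhds_zero_nat (𝕜 := ℝ))).const_mul (r * L))
    simp only [mul_one, mul_zero, sub_zero] at hmain
    refine hmain.congr' ?_
    filter_upwards [eventually_gt_atTop 0] with n hn
    have hrec : ∑' m : ℕ, (m.descFactorial (r + 1) : ℝ) * (m : ℝ) ^ n * Real.exp (-L) ^ m =
        (∑' m : ℕ, (m.descFactorial r : ℝ) * (m : ℝ) ^ (n + 1) * Real.exp (-L) ^ m) -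
          r * ∑' m : ℕ, (m.descFactorial r : ℝ) * (m : ℝ) ^ n * Real.exp (-L) ^ m := by
      rw [← tsum_mul_left, ← (summable_descFactorial_mul_pow_mul_pow r (n + 1) hq).tsum_sub
        ((summable_descFactorial_mul_pow_mul_pow r n hq).mul_left _)]
      refine tsum_congr fun m => ?_
      rw [descFactorial_succ_cast]
      ring
    rw [hrec]
    simp only [Function.comp_apply]
    have hn' : (n : ℝ) ≠ 0 := by positivity
    have hn1 : (n : ℝ) + 1 ≠ 0 := by positivity
    have hf : (n.factorial : ℝ) ≠ 0 := by positivity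
    rw [Nat.factorial_succ, show 1 + 1 / (n : ℝ) = (n + 1) / n by field_simp, div_pow]
    push_cast
    field_simp
    ring

/-- Surjections `Fin (r + n) → Fin j` that are injective on the first `r` elements. -/
def injSurjCount (r n j : ℕ) : ℕ :=
  Fintype.card {f : Fin (r + n) → Fin j //
    Function.Surjective f ∧ Function.Injective (fun i : Fin r => f (Fin.castAdd n i))}

theorem injSurjCount_eq_zero_of_lt {r n j : ℕ} (h : j < r) : injSurjCount r n j = 0 := by
  refine Fintype.card_eq_zero_iff.mpr ⟨fun f => ?_⟩
  have := Fintype.card_le_of_injective _ f.2.2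
  simp at this
  omega

theorem injSurjCount_eq_zero_of_gt {r n j : ℕ} (h : r + n < j) : injSurjCount r n j = 0 := by
  refine Fintype.card_eq_zero_iff.mpr ⟨fun f => ?_⟩
  have := Fintype.card_le_of_surjective _ f.2.1
  simp at this
  omega

theorem card_injOn_first (r n m : ℕ) :
    Fintype.card {f : Fin (r + n) → Fin m //
      Function.Injective (fun i : Fin r => f (Fin.castAdd n i))} = m.descFactorial r * m ^ n := by
  have e : {f : Fin (r + n) → Fin m // Function.Injective (fun i : Fin r => f (Fin.castAdd n i))} ≃
      (Fin r ↪ Fin m) × (Fin n → Fin m) :=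
    ((Fin.appendEquiv r n).symm.subtypeEquiv (q := fun p => Function.Injective p.1)
      fun f => Iff.rfl).trans <| Equiv.prodSubtypeFstEquivSubtypeProd.trans <|
        (Equiv.subtypeInjectiveEquivEmbedding _ _).prodCongr (Equiv.refl _)
  rw [Fintype.card_congr e]
  simp [Fintype.card_embedding_eq]

theorem card_image_eq_s10 (r n m : ℕ) (s : Finset (Fin m)) :
    Fintype.card {f : Fin (r + n) → Fin m // Finset.univ.image f = s ∧
      Function.Injective (fun i : Fin r => f (Fin.castAdd n i))} = injSurjCount r n s.card := by
  refine Fintype.card_congr ?_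
  refine
    { toFun := fun f => ⟨fun i => s.equivFin
        ⟨f.1 i, f.2.1.subset (Finset.mem_image_of_mem _ (Finset.mem_univ i))⟩, ?_, ?_⟩
      invFun := fun g => ⟨fun i => (s.equivFin.symm (g.1 i) : Fin m), ?_, ?_⟩
      left_inv := fun f => by simp
      right_inv := fun g => by simp }
  · intro j
    obtain ⟨x, rfl⟩ := s.equivFin.surjective j
    obtain ⟨i, -, hi⟩ := Finset.mem_image.mp (f.2.1.symm.subset x.2)
    exact ⟨i, by simp [hi]⟩
  · intro a b hab
    exact f.2.2 (by simpa using hab)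
  · ext x
    simp only [Finset.mem_image, Finset.mem_univ, true_and]
    constructor
    · rintro ⟨i, rfl⟩
      exact (s.equivFin.symm (g.1 i)).2
    · intro hx
      obtain ⟨i, hi⟩ := g.2.1 (s.equivFin ⟨x, hx⟩)
      exact ⟨i, by simp [hi]⟩
  · intro a b hab
    exact g.2.2 (by simpa [Subtype.ext_iff] using hab)

theorem descFactorial_mul_pow_eq_sum (r n m : ℕ) :
    m.descFactorial r * m ^ n =
      ∑ k ∈ Finset.range (n + 1), m.choose (r + k) * OS r n k := by
  have hfib : m.descFactorial r * m ^ n = ∑ s : Finset (Fin m), injSurjCount r n s.card := by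
    rw [← card_injOn_first]
    simp_rw [← card_image_eq_s10, Fintype.card_subtype]
    rw [Finset.card_eq_sum_card_fiberwise (f := fun f => Finset.univ.image f)
      (t := Finset.univ) (by simp)]
    refine Finset.sum_congr rfl fun s _ => ?_
    rw [Finset.filter_filter]
    simp only [and_comm]
  have hcard : ∑ s : Finset (Fin m), injSurjCount r n s.card =
      ∑ j ∈ Finset.range (m + 1), m.choose j * injSurjCount r n j := by
    simpa using Finset.sum_powerset_apply_card (injSurjCount r n)
      (x := (Finset.univ : Finset (Fin m)))
  have hext : ∑ j ∈ Finset.range (m + 1), m.choose j * injSurjCount r n j =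
      ∑ j ∈ Finset.range (r + (n + 1)), m.choose j * injSurjCount r n j := by
    trans ∑ j ∈ Finset.range (m + 1 + (r + (n + 1))), m.choose j * injSurjCount r n j
    · refine Finset.sum_subset (by simp) fun j _ hj => ?_
      rw [Nat.choose_eq_zero_of_lt (by simpa using hj), zero_mul]
    · refine (Finset.sum_subset (by simp) fun j _ hj => ?_).symm
      rw [injSurjCount_eq_zero_of_gt (by simp at hj; omega), mul_zero]
  rw [hfib, hcard, hext, Finset.sum_range_add, Finset.sum_eq_zero, zero_add]
  · rfl
  · intro j hj
    rw [injSurjCount_eq_zero_of_lt (by simpa using hj), mul_zero]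

theorem hasSum_choose_mul_half_pow (j : ℕ) :
    HasSum (fun m : ℕ => (m.choose j : ℝ) * (1 / 2) ^ m) 2 := by
  have h := (hasSum_choose_mul_geometric_of_norm_lt_one j (r := (1 / 2 : ℝ))
    (by norm_num)).mul_left ((1 / 2) ^ j)
  rw [← hasSum_nat_add_iff' j, Finset.sum_eq_zero, sub_zero]
  · have htwo : (1 / 2 : ℝ) ^ j * (1 / (1 - 1 / 2) ^ (j + 1)) = 2 := by
      rw [show (1 - 1 / 2 : ℝ) = 1 / 2 by norm_num, pow_succ]
      field_simp
    rw [htwo] at h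
    exact h.congr_fun fun m => by ring
  · intro m hm
    simp [Nat.choose_eq_zero_of_lt (Finset.mem_range.mp hm)]

theorem tsum_descFactorial_mul_pow_mul_half_pow (r n : ℕ) :
    ∑' m : ℕ, (m.descFactorial r : ℝ) * (m : ℝ) ^ n * (1 / 2) ^ m =
      2 * ∑ k ∈ Finset.range (n + 1), (OS r n k : ℝ) := by
  have h : HasSum (fun m : ℕ => ∑ k ∈ Finset.range (n + 1),
      (OS r n k : ℝ) * ((m.choose (r + k) : ℝ) * (1 / 2) ^ m))
      (∑ k ∈ Finset.range (n + 1), (OS r n k : ℝ) * 2) :=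
    hasSum_sum fun k _ => (hasSum_choose_mul_half_pow (r + k)).mul_left _
  rw [← Finset.sum_mul, mul_comm] at h
  rw [← h.tsum_eq]
  refine tsum_congr fun m => ?_
  have := congrArg (Nat.cast (R := ℝ)) (descFactorial_mul_pow_eq_sum r n m)
  push_cast at this
  rw [this, Finset.sum_mul]
  exact Finset.sum_congr rfl fun k _ => by ring

theorem OS_zero_le (r n : ℕ) : OS r n 0 ≤ r ^ (r + n) := by
  refine (Fintype.card_subtype_le _).trans ?_
  simp

theorem rFubini_add_OS_zero {r n : ℕ} (hn : n ≠ 0) :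
    rFubini r n + OS r n 0 = ∑ k ∈ Finset.range (n + 1), OS r n k := by
  rw [rFubini, if_neg hn, Finset.sum_range_succ', Finset.range_eq_Ico,
    Finset.sum_Ico_add' (OS r n) 0 n 1]
  rfl

/-- For fixed `r`, `F_{n,r} ∼ (1/(2·(log 2)^{r+1})) · n!·nʳ/(log 2)ⁿ` as `n → ∞`. -/
theorem rFubini_asymptotic (r : ℕ) :
    Filter.Tendsto
      (fun n : ℕ => (rFubini r n : ℝ) * (Real.log 2) ^ (n + r + 1) * 2 /
        ((n.factorial : ℝ) * (n : ℝ) ^ r))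
      Filter.atTop (nhds 1) := by
  have hL : 0 < Real.log 2 := Real.log_pos one_lt_two
  have hmain := tendsto_tsum_descFactorial_mul_pow_mul_exp_neg_pow hL r
  have hhalf : Real.exp (-Real.log 2) = 1 / 2 := by
    rw [Real.exp_neg, Real.exp_log two_pos, one_div]
  simp only [hhalf, tsum_descFactorial_mul_pow_mul_half_pow] at hmain
  have herr : Tendsto (fun n : ℕ => (OS r n 0 : ℝ) * (Real.log 2) ^ (n + r + 1) * 2 /
      ((n.factorial : ℝ) * (n : ℝ) ^ r)) atTop (𝓝 0) := by
    have hbound := (FloorSemiring.tendsto_pow_div_factorial_atTop ((r : ℝ) * Real.log 2)).const_mul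
      ((r : ℝ) ^ r * Real.log 2 ^ (r + 1) * 2)
    rw [mul_zero] at hbound
    refine squeeze_zero' (Eventually.of_forall fun n => by positivity) ?_ hbound
    filter_upwards [eventually_ge_atTop 1] with n hn
    have h1 : (1 : ℝ) ≤ (n : ℝ) ^ r := one_le_pow₀ (by exact_mod_cast hn)
    have hOS : (OS r n 0 : ℝ) ≤ (r : ℝ) ^ (r + n) := by exact_mod_cast OS_zero_le r n
    calc (OS r n 0 : ℝ) * (Real.log 2) ^ (n + r + 1) * 2 / ((n.factorial : ℝ) * (n : ℝ) ^ r)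
        ≤ (r : ℝ) ^ (r + n) * (Real.log 2) ^ (n + r + 1) * 2 / ((n.factorial : ℝ) * 1) := by
          gcongr
      _ = _ := by ring
  have hdiff := hmain.sub herr
  rw [sub_zero] at hdiff
  refine hdiff.congr' ?_
  filter_upwards [eventually_ne_atTop 0] with n hn
  have h := congrArg (Nat.cast (R := ℝ)) (rFubini_add_OS_zero (r := r) hn)
  push_cast at h
  rw [← h]
  ring
end

section
/- For every fixed r ≥ 0, let M_{n,r} be the smallest k in {1, ..., n} maximizing OS_r(n,k). Then M_{n,r} is asymptotically n/(2 log 2): the ratio M_{n,r} / (n / (2 log 2)) tends to 1 as n → ∞. -/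
open Polynomial

/-- Maps that are injective on the first `r` points and have image exactly `s` are counted by the
ordered `r`-Stirling numbers. -/
theorem card_injective_image_eq (r n k m : ℕ) (s : Finset (Fin m)) (hs : s.card = r + k) :
    (Finset.univ.filter (fun f : Fin (r + n) → Fin m =>
      Function.Injective (fun i : Fin r => f (Fin.castAdd n i)) ∧
        Finset.univ.image f = s)).card = OS r n k := by
  have e : s ≃ Fin (r + k) := s.equivFinOfCardEq hs
  rw [OS, Fintype.card_subtype]
  symm
  refine Finset.card_bij (fun g _ i => ((e.symm (g i) : s) : Fin m)) ?_ ?_ ?_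
  · intro g hg
    simp only [Finset.mem_filter, Finset.mem_univ, true_and] at hg ⊢
    refine ⟨fun a b hab => hg.2 (e.symm.injective (Subtype.ext hab)), ?_⟩
    ext a
    simp only [Finset.mem_image, Finset.mem_univ, true_and]
    constructor
    · rintro ⟨i, rfl⟩
      exact (e.symm (g i)).2
    · intro ha
      obtain ⟨i, hi⟩ := hg.1 (e ⟨a, ha⟩)
      exact ⟨i, by simp [hi]⟩
  · intro g _ g' _ h
    funext i
    exact e.symm.injective (Subtype.ext (congrFun h i))
  · intro f hf
    simp only [Finset.mem_filter, Finset.mem_univ, true_and] at hf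
    have hmem : ∀ i, f i ∈ s := fun i => hf.2 ▸ Finset.mem_image_of_mem f (Finset.mem_univ i)
    refine ⟨fun i => e ⟨f i, hmem i⟩, ?_, by simp⟩
    simp only [Finset.mem_filter, Finset.mem_univ, true_and]
    refine ⟨fun b => ?_, fun a b hab => hf.1 ?_⟩
    · obtain ⟨i, -, hi⟩ := Finset.mem_image.1 (hf.2.symm.subset (e.symm b).2)
      exact ⟨i, e.eq_symm_apply.1 (Subtype.ext hi)⟩
    · simpa using e.injective hab

theorem choose_mul_OS_le (r n k m : ℕ) : m.choose (r + k) * OS r n k ≤ m ^ (r + n) := by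
  have h := Finset.card_biUnion (s := Finset.powersetCard (r + k) (Finset.univ : Finset (Fin m)))
    (t := fun s => Finset.univ.filter (fun f : Fin (r + n) → Fin m =>
      Function.Injective (fun i : Fin r => f (Fin.castAdd n i)) ∧ Finset.univ.image f = s))
    (by
      intro s _ t _ hst
      rw [Function.onFun, Finset.disjoint_left]
      intro f hf hf'
      simp only [Finset.mem_filter, Finset.mem_univ, true_and] at hf hf'
      exact hst (hf.2.symm.trans hf'.2))
  rw [Finset.sum_congr rfl (fun s hs => card_injective_image_eq r n k m s
    (Finset.mem_powersetCard.1 hs).2), Finset.sum_const, Finset.card_powersetCard,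
    Finset.card_univ, Fintype.card_fin, smul_eq_mul] at h
  rw [← h]
  refine (Finset.card_le_univ _).trans_eq ?_
  simp

theorem pow_le_sum_choose_mul_OS (r n m : ℕ) (hm : r ≤ m) :
    m ^ n ≤ ∑ k ∈ Finset.range (n + 1), m.choose (r + k) * OS r n k := by
  set T := Finset.univ.filter (fun f : Fin (r + n) → Fin m =>
      Function.Injective (fun i : Fin r => f (Fin.castAdd n i))) with hT
  have hlow : m ^ n ≤ T.card := by
    have := Finset.card_le_card_of_injOn (s := (Finset.univ : Finset (Fin n → Fin m))) (t := T)
      (fun g => Fin.append (Fin.castLE hm) g)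
      (by
        intro g _
        simp only [hT, Finset.coe_filter, Finset.mem_univ, true_and, Set.mem_ofPred_eq,
          Fin.append_left]
        exact Fin.castLE_injective hm)
      (by
        intro g _ g' _ h
        funext i
        simpa using congrFun h (Fin.natAdd r i))
    simpa using this
  refine hlow.trans ?_
  have hsub : T ⊆ (Finset.range (n + 1)).biUnion fun k =>
      (Finset.powersetCard (r + k) (Finset.univ : Finset (Fin m))).biUnion fun s =>
        Finset.univ.filter (fun f : Fin (r + n) → Fin m =>
          Function.Injective (fun i : Fin r => f (Fin.castAdd n i)) ∧
            Finset.univ.image f = s) := by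
    intro f hf
    simp only [hT, Finset.mem_filter, Finset.mem_univ, true_and] at hf
    have hr : r ≤ (Finset.univ.image f).card := by
      calc r = (Finset.univ.image (fun i : Fin r => f (Fin.castAdd n i))).card := by
            rw [Finset.card_image_of_injective _ hf]; simp
        _ ≤ _ := by
            apply Finset.card_le_card
            intro a ha
            simp only [Finset.mem_image, Finset.mem_univ, true_and] at ha ⊢
            obtain ⟨i, hi⟩ := ha
            exact ⟨_, hi⟩
    have hn : (Finset.univ.image f).card ≤ r + n := by
      simpa using Finset.card_image_le (s := Finset.univ) (f := f)
    simp only [Finset.mem_biUnion, Finset.mem_range, Finset.mem_powersetCard, Finset.mem_filter,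
      Finset.mem_univ, true_and, Finset.subset_univ]
    exact ⟨(Finset.univ.image f).card - r, by omega, _, by omega, hf, rfl⟩
  refine (Finset.card_le_card hsub).trans (Finset.card_biUnion_le.trans ?_)
  refine Finset.sum_le_sum fun k _ => Finset.card_biUnion_le.trans_eq ?_
  rw [Finset.sum_congr rfl (fun s hs => card_injective_image_eq r n k m s
    (Finset.mem_powersetCard.1 hs).2), Finset.sum_const, Finset.card_powersetCard,
    Finset.card_univ, Fintype.card_fin, smul_eq_mul]

theorem natCast_pow_le_mul_exp {x : ℝ} (hx : 0 < x) (n m : ℕ) :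
    (m : ℝ) ^ n ≤ (n / (Real.exp 1 * x)) ^ n * Real.exp x ^ m := by
  rcases Nat.eq_zero_or_pos n with rfl | hn
  · simpa using one_le_pow₀ (Real.one_le_exp hx.le)
  have hn' : (0 : ℝ) < n := by exact_mod_cast hn
  have h1 : (m : ℝ) ≤ n / (Real.exp 1 * x) * Real.exp (x * m / n) := by
    have h := Real.add_one_le_exp (x * m / n - 1)
    rw [Real.exp_sub, sub_add_cancel] at h
    calc (m : ℝ) = n / x * (x * m / n) := by field_simp
      _ ≤ n / x * (Real.exp (x * m / n) / Real.exp 1) := by gcongr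
      _ = _ := by field_simp
  calc (m : ℝ) ^ n ≤ (n / (Real.exp 1 * x) * Real.exp (x * m / n)) ^ n := by gcongr
    _ = _ := by
      rw [mul_pow, ← Real.exp_nat_mul, ← Real.exp_nat_mul]
      congr 2
      field_simp

/-- Exponentially tilted upper bound for the ordered `r`-Stirling numbers. -/
theorem exists_OS_mul_pow_le (r : ℕ) {x q : ℝ} (hx : 0 < x) (hq : 0 < q)
    (hxq : Real.exp x * q < 1) :
    ∃ C : ℝ, ∀ n k : ℕ, (OS r n k : ℝ) * (q / (1 - q)) ^ k ≤ C * (n / (Real.exp 1 * x)) ^ n := by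
  have hq1 : q < 1 := by
    have := Real.one_le_exp hx.le
    nlinarith
  have hz : 0 ≤ Real.exp x * q := by positivity
  have hsum : Summable fun m : ℕ => (m : ℝ) ^ r * (Real.exp x * q) ^ m :=
    summable_pow_mul_geometric_of_norm_lt_one r (by rwa [Real.norm_of_nonneg hz])
  set D := ∑' m : ℕ, (m : ℝ) ^ r * (Real.exp x * q) ^ m with hD
  refine ⟨D * ((1 - q) ^ (r + 1) / q ^ r), fun n k => ?_⟩
  set B := ((n : ℝ) / (Real.exp 1 * x)) ^ n with hB
  have hB0 : 0 ≤ B := by positivity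
  have hchoose := (hasSum_choose_mul_geometric_of_norm_lt_one (r + k)
    (r := q) (by rwa [Real.norm_of_nonneg hq.le])).mul_left ((OS r n k : ℝ) * q ^ (r + k))
  have hshift : Summable fun j : ℕ =>
      ((j + (r + k) : ℕ) : ℝ) ^ r * (Real.exp x * q) ^ (j + (r + k)) :=
    (summable_nat_add_iff (r + k)).2 hsum
  have hterm : ∀ j : ℕ, (OS r n k : ℝ) * q ^ (r + k) * (((j + (r + k)).choose (r + k) : ℕ) * q ^ j)
      ≤ B * (((j + (r + k) : ℕ) : ℝ) ^ r * (Real.exp x * q) ^ (j + (r + k))) := by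
    intro j
    set m := j + (r + k) with hm
    have h1 : ((m.choose (r + k) : ℕ) : ℝ) * OS r n k ≤ (m : ℝ) ^ (r + n) := by
      exact_mod_cast choose_mul_OS_le r n k m
    calc (OS r n k : ℝ) * q ^ (r + k) * ((m.choose (r + k) : ℕ) * q ^ j)
        = ((m.choose (r + k) : ℕ) * OS r n k) * q ^ m := by rw [hm, pow_add]; ring
      _ ≤ (m : ℝ) ^ (r + n) * q ^ m := by gcongr
      _ = (m : ℝ) ^ r * (m : ℝ) ^ n * q ^ m := by rw [pow_add]
      _ ≤ (m : ℝ) ^ r * (B * Real.exp x ^ m) * q ^ m := by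
          gcongr
          exact natCast_pow_le_mul_exp hx n m
      _ = _ := by rw [mul_pow]; ring
  have hle := hasSum_le hterm hchoose (hshift.mul_left B).hasSum
  rw [tsum_mul_left] at hle
  have htail : ∑' j : ℕ, ((j + (r + k) : ℕ) : ℝ) ^ r * (Real.exp x * q) ^ (j + (r + k)) ≤ D := by
    rw [hD, ← hsum.sum_add_tsum_nat_add (r + k)]
    exact le_add_of_nonneg_left (Finset.sum_nonneg fun _ _ => by positivity)
  have hfin := hle.trans (mul_le_mul_of_nonneg_left htail hB0)
  have h1q : 0 < 1 - q := by linarith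
  calc (OS r n k : ℝ) * (q / (1 - q)) ^ k
      = (OS r n k : ℝ) * q ^ (r + k) * (1 / (1 - q) ^ (r + k + 1)) *
          ((1 - q) ^ (r + 1) / q ^ r) := by
        rw [div_pow, pow_add q, pow_add (1 - q), pow_add (1 - q) r k, pow_add (1 - q) r 1]
        field_simp
    _ ≤ B * D * ((1 - q) ^ (r + 1) / q ^ r) := by gcongr
    _ = _ := by ring

theorem le_sum_OS (r n : ℕ) (hn : r ≤ n) :
    ((n : ℝ) / (Real.exp 1 * Real.log 2)) ^ n / 2 ≤
      ∑ k ∈ Finset.range (n + 1), (OS r n k : ℝ) := by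
  have hlog : 0 < Real.log 2 := Real.log_pos one_lt_two
  have hlog1 : Real.log 2 ≤ 1 := by linarith [Real.log_two_lt_d9]
  set m := ⌈(n : ℝ) / Real.log 2⌉₊ with hm
  have hm1 : (n : ℝ) / Real.log 2 ≤ m := Nat.le_ceil _
  have hm2 : (m : ℝ) < n / Real.log 2 + 1 := Nat.ceil_lt_add_one (by positivity)
  have hnm : n ≤ m := by
    have : (n : ℝ) ≤ m := (le_div_self (by positivity) hlog hlog1).trans hm1
    exact_mod_cast this
  have hpow : (2 : ℝ) ^ m ≤ 2 * Real.exp 1 ^ n := by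
    calc (2 : ℝ) ^ m = Real.exp (m * Real.log 2) := by
          rw [Real.exp_nat_mul, Real.exp_log two_pos]
      _ ≤ Real.exp (Real.log 2 + n * 1) := by
          gcongr
          calc (m : ℝ) * Real.log 2 ≤ (n / Real.log 2 + 1) * Real.log 2 := by gcongr
            _ = _ := by field_simp; ring
      _ = _ := by rw [Real.exp_add, Real.exp_log two_pos, Real.exp_nat_mul]
  have h1 : (m : ℝ) ^ n ≤ 2 ^ m * ∑ k ∈ Finset.range (n + 1), (OS r n k : ℝ) := by
    have h2 : m ^ n ≤ 2 ^ m * ∑ k ∈ Finset.range (n + 1), OS r n k := by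
      refine (pow_le_sum_choose_mul_OS r n m (hn.trans hnm)).trans ?_
      rw [Finset.mul_sum]
      gcongr
      exact Nat.choose_le_two_pow _ _
    exact_mod_cast h2
  have hS : 0 ≤ ∑ k ∈ Finset.range (n + 1), (OS r n k : ℝ) := by positivity
  have h3 : ((n : ℝ) / Real.log 2) ^ n ≤
      2 * Real.exp 1 ^ n * ∑ k ∈ Finset.range (n + 1), (OS r n k : ℝ) :=
    calc ((n : ℝ) / Real.log 2) ^ n ≤ (m : ℝ) ^ n := by gcongr
      _ ≤ _ := h1
      _ ≤ _ := by gcongr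
  rw [mul_comm (Real.exp 1), ← div_div, div_pow (_ / _), div_div, div_le_iff₀ (by positivity)]
  linarith

theorem exists_log_two_lt_tilt (α : ℝ) (hα : α * Real.log 2 - 1 / 2 ≠ 0) :
    ∃ t : ℝ, 0 < t * (α * Real.log 2 - 1 / 2) ∧
      Real.log 2 < Real.log (1 + Real.exp (-t)) * Real.exp (α * t) := by
  set c := α * Real.log 2 - 1 / 2 with hc
  have hd : HasDerivAt
      (fun u : ℝ => Real.log (1 + Real.exp (-(u * c))) * Real.exp (α * (u * c))) (c * c) 0 := by
    have hu : HasDerivAt (fun u : ℝ => u * c) c 0 := by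
      simpa using (hasDerivAt_id (0 : ℝ)).mul_const c
    have h1 := ((hu.neg.exp.const_add 1).log (by positivity)).mul (hu.const_mul α).exp
    refine h1.congr_deriv ?_
    simp only [zero_mul, neg_zero, Real.exp_zero, mul_zero, mul_one, one_mul, Pi.neg_apply]
    norm_num
    rw [hc]
    ring
  have hpos : 0 < c * c := mul_self_pos.2 hα
  have hslope := (hasDerivAt_iff_tendsto_slope.1 hd).eventually (lt_mem_nhds hpos)
  obtain ⟨u, hu, hu0⟩ := ((hslope.filter_mono (nhdsGT_le_nhdsNE 0)).and
    self_mem_nhdsWithin).exists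
  have hu0' : (0 : ℝ) < u := hu0
  refine ⟨u * c, by rw [mul_assoc]; positivity, ?_⟩
  rw [slope_def_field, sub_zero, div_pos_iff_of_pos_right hu0'] at hu
  norm_num at hu
  linarith

/-- Indices bounded away from `n / (2 log 2)` carry exponentially small ordered `r`-Stirling
numbers, compared to the average. -/
theorem eventually_mul_OS_lt_sum (r : ℕ) (α : ℝ) (hα : α * Real.log 2 - 1 / 2 ≠ 0) :
    ∀ᶠ n : ℕ in Filter.atTop, ∀ k : ℕ, 0 ≤ (k - α * n) * (α * Real.log 2 - 1 / 2) →
      ((n : ℝ) + 1) * OS r n k < ∑ j ∈ Finset.range (n + 1), (OS r n j : ℝ) := by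
  obtain ⟨t, htc, ht⟩ := exists_log_two_lt_tilt α hα
  have hlog : 0 < Real.log 2 := Real.log_pos one_lt_two
  obtain ⟨x, hx1, hx2⟩ := exists_between ((div_lt_iff₀ (Real.exp_pos (α * t))).2 ht)
  have hx : 0 < x := lt_trans (by positivity) hx1
  rw [div_lt_iff₀ (Real.exp_pos _)] at hx1
  have hqx : Real.exp x * (Real.exp t / (1 + Real.exp t)) < 1 := by
    have h := (Real.lt_log_iff_exp_lt (by positivity)).1 hx2
    calc Real.exp x * (Real.exp t / (1 + Real.exp t))
        < (1 + Real.exp (-t)) * (Real.exp t / (1 + Real.exp t)) := by gcongr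
      _ = 1 := by rw [Real.exp_neg]; field_simp; ring
  obtain ⟨C, hC⟩ := exists_OS_mul_pow_le r hx (q := Real.exp t / (1 + Real.exp t))
    (by positivity) hqx
  have hy : Real.exp t / (1 + Real.exp t) / (1 - Real.exp t / (1 + Real.exp t)) = Real.exp t := by
    have : 1 - Real.exp t / (1 + Real.exp t) = 1 / (1 + Real.exp t) := by field_simp; ring
    rw [this]
    field_simp
  rw [hy] at hC
  set A := x * Real.exp (α * t) with hA
  have hA0 : 0 < A := by positivity
  set ρ := Real.log 2 / A with hρ
  have hρ0 : 0 < ρ := by positivity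
  have hρ1 : ρ < 1 := (div_lt_one hA0).2 hx1
  have hlim : Filter.Tendsto (fun n : ℕ => ((n : ℝ) * ρ ^ n + ρ ^ n) * C) Filter.atTop
      (nhds ((0 + 0) * C)) :=
    ((tendsto_self_mul_const_pow_of_lt_one hρ0.le hρ1).add
      (tendsto_pow_atTop_nhds_zero_of_lt_one hρ0.le hρ1)).mul_const C
  rw [add_zero, zero_mul] at hlim
  filter_upwards [hlim.eventually (gt_mem_nhds (show (0 : ℝ) < 1 / 2 by norm_num)),
    Filter.eventually_ge_atTop r, Filter.eventually_gt_atTop 0] with n hn hrn hn0 k hk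
  have hn0' : (0 : ℝ) < n := by exact_mod_cast hn0
  refine lt_of_lt_of_le ?_ (le_sum_OS r n hrn)
  set L := ((n : ℝ) / (Real.exp 1 * Real.log 2)) ^ n with hL
  have hL0 : 0 < L := by positivity
  have htk : 0 ≤ t * (k - α * n) := by
    have h1 : 0 ≤ t * (k - α * n) * ((α * Real.log 2 - 1 / 2) * (α * Real.log 2 - 1 / 2)) := by
      nlinarith [mul_nonneg htc.le hk]
    exact nonneg_of_mul_nonneg_left h1 (mul_self_pos.2 hα)
  have hexp : Real.exp (α * t) ^ n ≤ Real.exp t ^ k := by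
    rw [← Real.exp_nat_mul, ← Real.exp_nat_mul]
    apply Real.exp_le_exp.2
    linarith
  have hOS : (OS r n k : ℝ) ≤ C * ρ ^ n * L := by
    have h1 : (OS r n k : ℝ) * Real.exp (α * t) ^ n ≤ C * (n / (Real.exp 1 * x)) ^ n :=
      (mul_le_mul_of_nonneg_left hexp (by positivity)).trans (hC n k)
    rw [← le_div_iff₀ (by positivity)] at h1
    refine h1.trans_eq ?_
    rw [hL, mul_assoc, ← mul_pow, mul_div_assoc, ← div_pow]
    congr 2
    rw [hρ, hA]
    field_simp
  calc ((n : ℝ) + 1) * OS r n k ≤ (n + 1) * (C * ρ ^ n * L) := by gcongr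
    _ = ((n * ρ ^ n + ρ ^ n) * C) * L := by ring
    _ < 1 / 2 * L := by gcongr
    _ = L / 2 := by ring

/-- For fixed `r`, the smallest mode `M_{n,r}` of the sequence
`OS_r(n,1), …, OS_r(n,n)` satisfies `M_{n,r} ∼ n/(2 log 2)` as `n → ∞`. -/
theorem mode_ordered_rStirling_asymptotic
    (r : ℕ) (M : ℕ → ℕ)
    (hmem : ∀ n, 1 ≤ n → M n ∈ Finset.Icc 1 n)
    (hmax : ∀ n, 1 ≤ n → ∀ k ∈ Finset.Icc 1 n, OS r n k ≤ OS r n (M n))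
    (hmin : ∀ n, 1 ≤ n → ∀ k ∈ Finset.Icc 1 n,
      (∀ j ∈ Finset.Icc 1 n, OS r n j ≤ OS r n k) → M n ≤ k) :
    Filter.Tendsto (fun n : ℕ => (M n : ℝ) / ((n : ℝ) / (2 * Real.log 2)))
      Filter.atTop (nhds 1) := by

  have hlog : 0 < Real.log 2 := Real.log_pos one_lt_two
  have havg : ∀ᶠ n : ℕ in Filter.atTop,
      ∑ j ∈ Finset.range (n + 1), (OS r n j : ℝ) ≤ ((n : ℝ) + 1) * OS r n (M n) := by
    filter_upwards [eventually_mul_OS_lt_sum r 0 (by norm_num),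
      Filter.eventually_ge_atTop 1] with n hn hn1
    by_contra! hlt
    have hall : ∀ k ∈ Finset.range (n + 1),
        ((n : ℝ) + 1) * OS r n k < ∑ j ∈ Finset.range (n + 1), (OS r n j : ℝ) := by
      intro k hk
      rcases Nat.eq_zero_or_pos k with rfl | hk0
      · exact hn 0 (by simp)
      · have hle : (OS r n k : ℝ) ≤ OS r n (M n) := by
          exact_mod_cast hmax n hn1 k
            (Finset.mem_Icc.2 ⟨hk0, Nat.lt_succ_iff.1 (Finset.mem_range.1 hk)⟩)
        exact lt_of_le_of_lt (by gcongr) hlt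
    have hsum := Finset.sum_lt_sum_of_nonempty Finset.nonempty_range_add_one hall
    rw [← Finset.mul_sum, Finset.sum_const, Finset.card_range, nsmul_eq_mul] at hsum
    push_cast at hsum
    exact lt_irrefl _ hsum
  have hwindow : ∀ a : ℝ, a ≠ 1 → ∀ᶠ n : ℕ in Filter.atTop,
      ((M n : ℝ) - a / (2 * Real.log 2) * n) * (a - 1) < 0 := by
    intro a ha
    have hα : a / (2 * Real.log 2) * Real.log 2 - 1 / 2 = (a - 1) / 2 := by field_simp
    have hne : a / (2 * Real.log 2) * Real.log 2 - 1 / 2 ≠ 0 := by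
      rw [hα]
      exact div_ne_zero (sub_ne_zero.2 ha) two_ne_zero
    filter_upwards [eventually_mul_OS_lt_sum r _ hne, havg] with n hn hle
    by_contra! hnn
    refine absurd (hn (M n) ?_) (not_lt.2 hle)
    rw [hα]
    linarith
  rw [tendsto_order]
  constructor
  · intro a ha
    filter_upwards [hwindow a ha.ne, Filter.eventually_gt_atTop 0] with n hn hn0
    have hn0' : (0 : ℝ) < n := by exact_mod_cast hn0
    have h := (pos_iff_neg_of_mul_neg hn).2 (sub_neg.2 ha)
    rw [lt_div_iff₀ (by positivity)]
    calc a * (n / (2 * Real.log 2)) = a / (2 * Real.log 2) * n := by ring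
      _ < M n := sub_pos.1 h
  · intro a ha
    filter_upwards [hwindow a ha.ne', Filter.eventually_gt_atTop 0] with n hn hn0
    have hn0' : (0 : ℝ) < n := by exact_mod_cast hn0
    have h := (neg_iff_pos_of_mul_neg hn).2 (sub_pos.2 ha)
    rw [div_lt_iff₀ (by positivity)]
    calc (M n : ℝ) < a / (2 * Real.log 2) * n := sub_neg.1 h
      _ = a * (n / (2 * Real.log 2)) := by ring
end

section
/- For every fixed m ≥ 1, the Whitney–Fubini numbers F_m(n) = F_m(n, 1) satisfy Σ_{n=0}^{∞} F_m(n) · t^n / n! = e^t / (1 - (e^{m t} - 1)/m) for all real t with |t| < log(m+1)/m, the series converging absolutely on this interval. -/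
open Polynomial

/-- The Whitney–Fubini polynomials: `F_m(0,x) = 1` and
`F_m(n,x) = (x+1)·F_m(n-1,x) + (x² + m x)·F_m'(n-1,x)`; the `k`-th coefficient of
`F_m(n,x)` is `k!·W_m(n,k)`, where `W_m(n,k)` are the Whitney numbers of the second
kind of the Dowling lattice. -/
noncomputable def WFPoly (m : ℕ) : ℕ → Polynomial ℝ
  | 0 => 1
  | n + 1 => (Polynomial.X + 1) * WFPoly m n +
      (Polynomial.X ^ 2 + Polynomial.C (m : ℝ) * Polynomial.X) *
        Polynomial.derivative (WFPoly m n)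

/-- The Whitney–Fubini numbers `F_m(n) = F_m(n, 1)`. -/
noncomputable def WFNum (m n : ℕ) : ℝ := (WFPoly m n).eval 1

/-- The denominator of the generating function has no zero in the disc of radius
`log (m + 1) / m`. -/
lemma one_sub_exp_sub_one_div_ne_zero (m : ℕ) (hm : 1 ≤ m) (z : ℂ)
    (hz : ‖z‖ < Real.log ((m : ℝ) + 1) / (m : ℝ)) :
    1 - (Complex.exp (m * z) - 1) / m ≠ 0 := by
  have hm0 : (0 : ℝ) < m := by exact_mod_cast hm
  have hmC : (m : ℂ) ≠ 0 := by exact_mod_cast hm0.ne'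
  intro h
  have hexp : Complex.exp (m * z) - 1 = m := by
    field_simp at h
    linear_combination -h
  have hnorm : ‖(m : ℂ) * z‖ < Real.log (m + 1) := by
    rw [norm_mul, Complex.norm_natCast, mul_comm]
    exact (lt_div_iff₀ hm0).1 hz
  have hre : ‖Complex.exp (m * z)‖ < m + 1 := by
    rw [Complex.norm_exp, ← Real.lt_log_iff_exp_lt (by positivity)]
    exact (Complex.re_le_norm _).trans_lt hnorm
  rw [sub_eq_iff_eq_add.1 hexp] at hre
  have : ‖(m : ℂ) + 1‖ = m + 1 := by exact_mod_cast Complex.norm_natCast (m + 1)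
  exact hre.ne this

/-- The derivatives of the generating function `G t = eᵗ / (1 - (e^{mt} - 1)/m)` are
`G t · F_m(n, y t)` with `y t = e^{mt} / (1 - (e^{mt} - 1)/m)`, since `G' = (1 + y) G` and
`y' = y² + m y`. -/
lemma iteratedDeriv_whitneyFubini_egf (m : ℕ) (hm : 1 ≤ m) (n : ℕ) :
    Set.EqOn
      (iteratedDeriv n fun z : ℂ => Complex.exp z / (1 - (Complex.exp (m * z) - 1) / m))
      (fun z => Complex.exp z / (1 - (Complex.exp (m * z) - 1) / m) *
        aeval (Complex.exp (m * z) / (1 - (Complex.exp (m * z) - 1) / m)) (WFPoly m n))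
      (Metric.ball 0 (Real.log ((m : ℝ) + 1) / (m : ℝ))) := by
  induction n with
  | zero => intro z _; simp [WFPoly]
  | succ n ih =>
    intro z hz
    have hm0 : (m : ℂ) ≠ 0 := by exact_mod_cast (Nat.one_le_iff_ne_zero.1 hm)
    have hD := one_sub_exp_sub_one_div_ne_zero m hm z (by simpa using hz)
    have hE : HasDerivAt (fun z : ℂ => Complex.exp (m * z)) (Complex.exp (m * z) * m) z := by
      simpa using ((hasDerivAt_id z).const_mul (m : ℂ)).cexp
    have hDer := ((hE.sub_const 1).div_const (m : ℂ)).const_sub 1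
    have hG := (Complex.hasDerivAt_exp z).fun_div hDer hD
    have hy := hE.fun_div hDer hD
    have hF := ((WFPoly m n).hasDerivAt_aeval
      (Complex.exp (m * z) / (1 - (Complex.exp (m * z) - 1) / m))).comp z hy
    rw [iteratedDeriv_succ,
      (ih.eventuallyEq_of_mem (Metric.isOpen_ball.mem_nhds hz)).deriv_eq]
    refine (hG.fun_mul hF).deriv.trans ?_
    simp only [WFPoly, map_add, map_mul, map_pow, aeval_X, map_one, Function.comp,
      map_natCast]
    generalize Complex.exp (m * z) = E at *
    generalize hDdef : 1 - (E - 1) / (m : ℂ) = D at *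
    have hED : E = m * (1 - D) + 1 := by
      rw [← hDdef]; field_simp; ring
    subst hED
    field_simp
    ring

/-- For `m ≥ 1`, the exponential generating function of the Whitney–Fubini numbers:
`∑ₙ F_m(n)·tⁿ/n! = eᵗ/(1 - (e^{mt} - 1)/m)` for `|t| < log(m+1)/m`
(the series converging absolutely there). -/
theorem whitneyFubini_egf (m : ℕ) (hm : 1 ≤ m) (t : ℝ)
    (ht : |t| < Real.log ((m : ℝ) + 1) / (m : ℝ)) :
    HasSum (fun n : ℕ => WFNum m n * t ^ n / (n.factorial : ℝ))
      (Real.exp t / (1 - (Real.exp ((m : ℝ) * t) - 1) / (m : ℝ))) := by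
  have hR : 0 < Real.log ((m : ℝ) + 1) / (m : ℝ) := (abs_nonneg t).trans_lt ht
  have hdiff : DifferentiableOn ℂ
      (fun z : ℂ => Complex.exp z / (1 - (Complex.exp (m * z) - 1) / m))
      (Metric.ball 0 (Real.log ((m : ℝ) + 1) / (m : ℝ))) := by
    refine DifferentiableOn.div (by fun_prop) (by fun_prop) fun z hz => ?_
    exact one_sub_exp_sub_one_div_ne_zero m hm z (by simpa using hz)
  have hsum := Complex.hasSum_taylorSeries_on_ball hdiff (z := (t : ℂ)) (by simpa using ht)
  rw [← Complex.hasSum_ofReal]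
  convert! hsum using 1
  · funext n
    have hn := iteratedDeriv_whitneyFubini_egf m hm n (Metric.mem_ball_self hR)
    have h1 : aeval (1 : ℂ) (WFPoly m n) = (WFNum m n : ℂ) := by
      simpa [WFNum] using aeval_algebraMap_apply ℂ (1 : ℝ) (WFPoly m n)
    simp only [mul_zero, Complex.exp_zero, sub_self, zero_div, sub_zero, div_one, one_mul,
      h1] at hn
    rw [hn]
    push_cast
    simp only [sub_zero, smul_eq_mul]
    ring
  · push_cast
    rfl
end

section
/- For every fixed m ≥ 1, the Whitney–Fubini numbers F_m(n) = F_m(n, 1) satisfy the asymptotic F_m(n) ~ (m·(1+m)^{1/m - 1} / log(m+1)) · m^n · n! / (log(m+1))^n as n → ∞; that is, F_m(n) · (log(m+1))^{n+1} / (m^{n+1} · (1+m)^{1/m - 1} · n!) tends to 1. -/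
open Polynomial

open MeasureTheory Filter Topology

/-- The linear functional sending `X ^ k` to `m ^ k * (j.choose k)`. -/
noncomputable def chooseFunctional (m j : ℕ) : ℝ[X] →ₗ[ℝ] ℝ :=
  Polynomial.lsum fun k => ((m : ℝ) ^ k * (j.choose k : ℝ)) • LinearMap.id

theorem chooseFunctional_monomial (m j k : ℕ) (c : ℝ) :
    chooseFunctional m j (monomial k c) = m ^ k * j.choose k * c := by
  simp [chooseFunctional, Polynomial.lsum_apply, Polynomial.sum_monomial_index]

theorem chooseFunctional_step (m j : ℕ) (p : ℝ[X]) :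
    chooseFunctional m j ((X + 1) * p + (X ^ 2 + C (m : ℝ) * X) * derivative p) =
      (1 + m * j) * chooseFunctional m j p := by
  induction p using Polynomial.induction_on' with
  | add p q hp hq =>
    rw [(chooseFunctional m j).map_add p q, mul_add (1 + (m : ℝ) * j), ← hp, ← hq, ← map_add,
      derivative_add]
    congr 1
    ring
  | monomial k c =>
    have e : (X + 1) * monomial k c + (X ^ 2 + C (m : ℝ) * X) * derivative (monomial k c) =
        monomial (k + 1) ((k + 1) * c) + monomial k ((1 + m * k) * c) := by
      rw [derivative_monomial]
      simp only [← C_mul_X_pow_eq_monomial, C_mul, C_add, C_1]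
      rcases k with _ | k
      · simp; ring
      · simp; ring
    rw [e, map_add]
    simp only [chooseFunctional_monomial]
    have h : ((j.choose (k + 1) : ℕ) : ℝ) * (k + 1) = j.choose k * (j - k) := by
      rcases le_or_gt k j with hk | hk
      · rw [← Nat.cast_sub hk]
        exact_mod_cast Nat.choose_succ_right_eq j k
      · simp [Nat.choose_eq_zero_of_lt hk, Nat.choose_eq_zero_of_lt (hk.trans (Nat.lt_succ_self k))]
    rw [pow_succ]
    linear_combination (m : ℝ) ^ k * m * c * h

theorem chooseFunctional_WFPoly (m j n : ℕ) :
    chooseFunctional m j (WFPoly m n) = (1 + m * j) ^ n := by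
  induction n with
  | zero =>
    have := chooseFunctional_monomial m j 0 1
    simpa [WFPoly] using this
  | succ n ih => rw [WFPoly, chooseFunctional_step, ih, pow_succ']

theorem hasSum_chooseFunctional (m : ℕ) (hm : 1 ≤ m) (p : ℝ[X]) :
    HasSum (fun j : ℕ => chooseFunctional m j p * (1 / ((m : ℝ) + 1)) ^ j)
      ((m + 1) / m * p.eval 1) := by
  have hm0 : (0 : ℝ) < m := by exact_mod_cast hm
  induction p using Polynomial.induction_on' with
  | add p q hp hq =>
    simpa [add_mul, mul_add] using hp.add hq
  | monomial k c =>
    have hq : ‖1 / ((m : ℝ) + 1)‖ < 1 := by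
      rw [Real.norm_of_nonneg (by positivity), div_lt_one (by positivity)]
      linarith
    have h := (hasSum_choose_mul_geometric_of_norm_lt_one k hq).mul_left
      (m ^ k * c * (1 / ((m : ℝ) + 1)) ^ k)
    have hz : ∑ i ∈ Finset.range k,
        chooseFunctional m i (monomial k c) * (1 / ((m : ℝ) + 1)) ^ i = 0 := by
      refine Finset.sum_eq_zero fun i hi => ?_
      simp [chooseFunctional_monomial, Nat.choose_eq_zero_of_lt (Finset.mem_range.1 hi)]
    rw [← hasSum_nat_add_iff' k, hz, sub_zero]
    convert! h using 1
    · ext j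
      rw [chooseFunctional_monomial, pow_add]
      ring
    · have e : 1 - 1 / ((m : ℝ) + 1) = m / (m + 1) := by field_simp; ring
      rw [e, div_pow, div_pow, eval_monomial, one_pow, mul_one]
      field_simp
      ring

theorem hasSum_WFNum (m n : ℕ) (hm : 1 ≤ m) :
    HasSum (fun j : ℕ => (1 + (m : ℝ) * j) ^ n * (1 / ((m : ℝ) + 1)) ^ j)
      ((m + 1) / m * WFNum m n) := by
  simpa only [chooseFunctional_WFPoly, WFNum] using hasSum_chooseFunctional m hm (WFPoly m n)

theorem abs_sub_integral_le_integral_abs_deriv {g g' : ℝ → ℝ} (hg : ∀ x, HasDerivAt g (g' x) x)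
    (hg' : Continuous g') {u v : ℝ} (huv : u ≤ v) :
    |(v - u) * g u - ∫ t in u..v, g t| ≤ (v - u) * ∫ t in u..v, |g' t| := by
  have hc : Continuous g := continuous_iff_continuousAt.2 fun x => (hg x).continuousAt
  have e : (v - u) * g u - ∫ t in u..v, g t = ∫ t in u..v, (g u - g t) := by
    rw [intervalIntegral.integral_sub (by simp) (hc.intervalIntegrable _ _)]
    simp
  rw [e, ← Real.norm_eq_abs, mul_comm, ← abs_of_nonneg (sub_nonneg.2 huv)]
  refine intervalIntegral.norm_integral_le_of_norm_le_const fun t ht => ?_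
  rw [Set.uIoc_of_le huv] at ht
  have h1 : g t - g u = ∫ s in u..t, g' s :=
    (intervalIntegral.integral_eq_sub_of_hasDerivAt (fun x _ => hg x)
      (hg'.intervalIntegrable _ _)).symm
  rw [Real.norm_eq_abs, abs_sub_comm, h1]
  refine (intervalIntegral.abs_integral_le_integral_abs ht.1.le).trans ?_
  exact intervalIntegral.integral_mono_interval le_rfl ht.1.le ht.2
    (Eventually.of_forall fun _ => abs_nonneg _) (hg'.abs.intervalIntegrable _ _)

/-- The Riemann sum of `g` over `[b, ∞)` with step `a` differs from the integral by at most
`a` times the total variation of `g`. -/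
theorem abs_riemannSum_sub_integral_Ioi_le {g g' : ℝ → ℝ} (hg : ∀ x, HasDerivAt g (g' x) x)
    (hg' : Continuous g') {a b S : ℝ} (ha : 0 < a) (hi : IntegrableOn g (Set.Ioi b))
    (hi' : IntegrableOn g' (Set.Ioi b)) (hS : HasSum (fun j : ℕ => g (b + a * j)) S) :
    |a * S - ∫ t in Set.Ioi b, g t| ≤ a * ∫ t in Set.Ioi b, |g' t| := by
  have hc : Continuous g := continuous_iff_continuousAt.2 fun x => (hg x).continuousAt
  have hy : Tendsto (fun N : ℕ => b + a * (N : ℝ)) atTop atTop :=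
    tendsto_atTop_add_const_left _ _ (tendsto_natCast_atTop_atTop.const_mul_atTop ha)
  refine le_of_tendsto_of_tendsto
    ((hS.tendsto_sum_nat.const_mul a).sub
      (intervalIntegral_tendsto_integral_Ioi b hi hy)).abs
    ((intervalIntegral_tendsto_integral_Ioi b hi'.abs hy).const_mul a)
    (Eventually.of_forall fun N => ?_)
  have h1 := intervalIntegral.sum_integral_adjacent_intervals (f := g) (μ := volume)
    (a := fun N : ℕ => b + a * (N : ℝ)) (n := N) fun k _ => hc.intervalIntegrable _ _
  have h2 := intervalIntegral.sum_integral_adjacent_intervals (f := fun t => |g' t|) (μ := volume)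
    (a := fun N : ℕ => b + a * (N : ℝ)) (n := N) fun k _ => hg'.abs.intervalIntegrable _ _
  simp only [Nat.cast_zero, mul_zero, add_zero] at h1 h2
  simp only
  rw [← h1, ← h2, Finset.mul_sum, Finset.mul_sum, ← Finset.sum_sub_distrib]
  refine (Finset.abs_sum_le_sum_abs _ _).trans (Finset.sum_le_sum fun k _ => ?_)
  have h := abs_sub_integral_le_integral_abs_deriv hg hg'
    (u := b + a * (k : ℝ)) (v := b + a * ((k + 1 : ℕ) : ℝ)) (by push_cast; nlinarith)
  have e : b + a * ((k + 1 : ℕ) : ℝ) - (b + a * (k : ℝ)) = a := by push_cast; ring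
  rwa [e] at h

/-- The density of the Gamma distribution with shape `n + 1` and rate `1`. -/
noncomputable def gammaDensity (n : ℕ) (y : ℝ) : ℝ := y ^ n * Real.exp (-y) / n.factorial

theorem gammaDensity_nonneg (n : ℕ) {y : ℝ} (hy : 0 ≤ y) : 0 ≤ gammaDensity n y := by
  unfold gammaDensity; positivity

theorem continuous_gammaDensity (n : ℕ) : Continuous (gammaDensity n) := by
  unfold gammaDensity; fun_prop

theorem gammaDensity_succ (n : ℕ) (y : ℝ) :
    gammaDensity (n + 1) y = y / (n + 1) * gammaDensity n y := by
  simp only [gammaDensity, Nat.factorial_succ, Nat.cast_mul, pow_succ]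
  push_cast
  field_simp

theorem hasDerivAt_gammaDensity_succ (n : ℕ) (y : ℝ) :
    HasDerivAt (gammaDensity (n + 1)) (gammaDensity n y - gammaDensity (n + 1) y) y := by
  have h := ((hasDerivAt_pow (n + 1) y).mul (hasDerivAt_neg y).exp).div_const
    ((n + 1).factorial : ℝ)
  convert! h using 1
  simp only [gammaDensity, Nat.factorial_succ, Nat.cast_mul, Nat.add_sub_cancel]
  push_cast
  field_simp
  ring

theorem integrableOn_gammaDensity (n : ℕ) : IntegrableOn (gammaDensity n) (Set.Ioi 0) := by
  have h := (Real.GammaIntegral_convergent (s := n + 1) (by positivity)).div_const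
    (n.factorial : ℝ)
  refine IntegrableOn.congr_fun h (fun y _ => ?_) measurableSet_Ioi
  simp [gammaDensity, mul_comm]

theorem integral_gammaDensity (n : ℕ) : ∫ y in Set.Ioi 0, gammaDensity n y = 1 := by
  have h := Real.Gamma_eq_integral (s := n + 1) (by positivity)
  rw [Real.Gamma_nat_eq_factorial] at h
  simp only [gammaDensity]
  rw [integral_div, div_eq_one_iff_eq (by positivity), h]
  refine setIntegral_congr_fun measurableSet_Ioi fun y _ => ?_
  simp [mul_comm]

theorem integral_abs_deriv_gammaDensity_le (n : ℕ) :
    ∫ y in Set.Ioi 0, |gammaDensity n y - gammaDensity (n + 1) y| ≤ 1 / √((n : ℝ) + 1) := by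
  set s := √((n : ℝ) + 1) with hs
  have hs0 : 0 < s := Real.sqrt_pos.2 (by positivity)
  have hss : s * s = n + 1 := Real.mul_self_sqrt (by positivity)
  have i0 := integrableOn_gammaDensity n
  have i1 := integrableOn_gammaDensity (n + 1)
  have i2 := integrableOn_gammaDensity (n + 2)
  have key : ∀ y ∈ Set.Ioi (0 : ℝ), |gammaDensity n y - gammaDensity (n + 1) y| ≤
      (1 / s / 2 + s / 2) * gammaDensity n y - s * gammaDensity (n + 1) y +
        s * (n + 2) / (2 * (n + 1)) * gammaDensity (n + 2) y := by
    intro y hy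
    have hd := gammaDensity_nonneg n (le_of_lt hy)
    have e : (1 / s / 2 + s / 2) * gammaDensity n y - s * gammaDensity (n + 1) y +
        s * (n + 2) / (2 * (n + 1)) * gammaDensity (n + 2) y =
        (1 / s + s * (1 - y / (n + 1)) ^ 2) / 2 * gammaDensity n y := by
      rw [gammaDensity_succ (n + 1), gammaDensity_succ n]
      push_cast
      field_simp
      ring
    have e' : gammaDensity n y - gammaDensity (n + 1) y = (1 - y / (n + 1)) * gammaDensity n y := by
      rw [gammaDensity_succ n]; ring
    rw [e, e', abs_mul, abs_of_nonneg hd]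
    refine mul_le_mul_of_nonneg_right ?_ hd
    rw [← sq_abs (1 - y / (n + 1))]
    set x := |1 - y / ((n : ℝ) + 1)|
    have : (1 / s + s * x ^ 2) / 2 - x = (1 - s * x) ^ 2 / (2 * s) := by field_simp; ring
    have : 0 ≤ (1 - s * x) ^ 2 / (2 * s) := by positivity
    linarith
  have j0 := i0.const_mul (1 / s / 2 + s / 2)
  have j1 := i1.const_mul s
  have j2 := i2.const_mul (s * (n + 2) / (2 * (n + 1)))
  refine (setIntegral_mono_on (i0.sub i1).abs ((j0.sub j1).add j2) measurableSet_Ioi key).trans ?_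
  rw [integral_add' (j0.sub j1) j2, integral_sub' j0 j1]
  simp only [integral_const_mul, integral_gammaDensity, ← hss]
  apply le_of_eq
  have : (n : ℝ) = s * s - 1 := by linarith
  rw [this]
  field_simp
  ring

theorem tendsto_integral_Ioi_gammaDensity {b : ℝ} (hb : 0 ≤ b) :
    Tendsto (fun n => ∫ y in Set.Ioi b, gammaDensity n y) atTop (𝓝 1) := by
  have h0 : Tendsto (fun n => ∫ y in (0 : ℝ)..b, gammaDensity n y) atTop (𝓝 0) := by
    have hl := (FloorSemiring.tendsto_pow_div_factorial_atTop b).mul_const |b - 0|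
    rw [zero_mul] at hl
    refine squeeze_zero_norm (fun n => ?_) hl
    refine intervalIntegral.norm_integral_le_of_norm_le_const fun y hy => ?_
    rw [Set.uIoc_of_le hb] at hy
    rw [Real.norm_of_nonneg (gammaDensity_nonneg n hy.1.le), gammaDensity]
    gcongr
    calc y ^ n * Real.exp (-y) ≤ y ^ n * 1 := by
          have := hy.1.le
          gcongr
          simpa using this
      _ ≤ b ^ n := by
          rw [mul_one]
          exact pow_le_pow_left₀ hy.1.le hy.2 n
  have h1 := h0.const_sub 1
  rw [sub_zero] at h1
  refine h1.congr fun n => ?_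
  have := intervalIntegral.integral_interval_add_Ioi (integrableOn_gammaDensity n)
    ((integrableOn_gammaDensity n).mono_set (Set.Ioi_subset_Ioi hb))
  rw [integral_gammaDensity] at this
  linarith

theorem tendsto_riemannSum_gammaDensity {a b : ℝ} (ha : 0 < a) (hb : 0 ≤ b) {T : ℕ → ℝ}
    (hT : ∀ n, HasSum (fun j : ℕ => gammaDensity n (b + a * j)) (T n)) :
    Tendsto (fun n => a * T n) atTop (𝓝 1) := by
  have hsub : Set.Ioi b ⊆ Set.Ioi 0 := Set.Ioi_subset_Ioi hb
  have hint := fun n => (integrableOn_gammaDensity n).mono_set hsub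
  rw [← tendsto_add_atTop_iff_nat 1]
  have h1 := (tendsto_add_atTop_iff_nat 1).2 (tendsto_integral_Ioi_gammaDensity hb)
  have hl : Tendsto (fun n : ℕ => a * (1 / √((n : ℝ) + 1))) atTop (𝓝 0) := by
    have : Tendsto (fun n : ℕ => √((n : ℝ) + 1)) atTop atTop :=
      Real.tendsto_sqrt_atTop.comp
        (tendsto_atTop_add_const_right _ _ tendsto_natCast_atTop_atTop)
    simpa using this.inv_tendsto_atTop.const_mul a
  have h2 : Tendsto (fun n => a * T (n + 1) - ∫ y in Set.Ioi b, gammaDensity (n + 1) y)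
      atTop (𝓝 0) := by
    refine squeeze_zero_norm (fun n => ?_) hl
    refine (abs_riemannSum_sub_integral_Ioi_le (hasDerivAt_gammaDensity_succ n)
      ((continuous_gammaDensity n).sub (continuous_gammaDensity (n + 1))) ha (hint _)
      ((hint n).sub (hint (n + 1))) (hT (n + 1))).trans ?_
    refine mul_le_mul_of_nonneg_left (le_trans ?_ (integral_abs_deriv_gammaDensity_le n)) ha.le
    exact setIntegral_mono_set
      ((integrableOn_gammaDensity n).sub (integrableOn_gammaDensity (n + 1))).abs
      (Eventually.of_forall fun _ => abs_nonneg _) hsub.eventuallyLE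
  simpa using h2.add h1

/-- For fixed `m ≥ 1`,
`F_m(n) ∼ (m·(1+m)^{1/m - 1}/log(m+1)) · mⁿ·n!/(log(m+1))ⁿ` as `n → ∞`. -/
theorem whitneyFubini_asymptotic (m : ℕ) (hm : 1 ≤ m) :
    Filter.Tendsto
      (fun n : ℕ => WFNum m n * (Real.log ((m : ℝ) + 1)) ^ (n + 1) /
        ((m : ℝ) ^ (n + 1) * (1 + (m : ℝ)) ^ (1 / (m : ℝ) - 1) * (n.factorial : ℝ)))
      Filter.atTop (nhds 1) := by
  have hm0 : (0 : ℝ) < m := by exact_mod_cast hm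
  set a := Real.log ((m : ℝ) + 1) with ha
  have ha0 : 0 < a := Real.log_pos (by linarith)
  have hexp : Real.exp a = m + 1 := Real.exp_log (by positivity)
  have hpow : (1 + (m : ℝ)) ^ (1 / (m : ℝ) - 1) = Real.exp (a / m) / (m + 1) := by
    rw [Real.rpow_sub (by positivity), Real.rpow_one, Real.rpow_def_of_pos (by positivity),
      add_comm 1 (m : ℝ), ← ha, mul_one_div]
  rw [hpow]
  have hT : ∀ n, HasSum (fun j : ℕ => gammaDensity n (a / m + a * j))
      ((a / m) ^ n * Real.exp (-(a / m)) / n.factorial * ((m + 1) / m * WFNum m n)) := by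
    intro n
    convert! (hasSum_WFNum m n hm).mul_left
      ((a / m) ^ n * Real.exp (-(a / m)) / n.factorial) using 1
    ext j
    have e1 : a / m + a * j = a / m * (1 + m * j) := by field_simp
    have e2 : Real.exp (-(a / m + a * j)) = Real.exp (-(a / m)) * (1 / ((m : ℝ) + 1)) ^ j := by
      rw [neg_add, Real.exp_add, ← hexp, one_div, ← Real.exp_neg, ← Real.exp_nat_mul]
      congr 2
      ring
    rw [gammaDensity, e2, e1, mul_pow]
    ring
  refine (tendsto_riemannSum_gammaDensity ha0 (by positivity) hT).congr fun n => ?_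
  rw [Real.exp_neg, div_pow]
  field_simp
  ring
end

section
/- For every fixed m ≥ 1, let W_{n,m} be the smallest index k in {0, ..., n} maximizing the k-th coefficient of the Whitney–Fubini polynomial F_m(n, x) (this coefficient equals k!·W_m(n,k)). Then W_{n,m} is asymptotically (m / ((m+1)·log(m+1)))·n: the ratio W_{n,m} / (m·n / ((m+1)·log(m+1))) tends to 1 as n → ∞. -/
open Polynomial

/-! ### Coefficients of the Whitney–Fubini polynomials -/

lemma natDegree_WFPoly_le (m n : ℕ) : (WFPoly m n).natDegree ≤ n := by
  induction n with
  | zero => simp [WFPoly]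
  | succ n ih =>
    have hlin : (X + 1 : ℝ[X]).natDegree ≤ 1 := by compute_degree
    have hquad : (X ^ 2 + C (m : ℝ) * X : ℝ[X]).natDegree ≤ 2 := by compute_degree
    rw [WFPoly]
    refine natDegree_add_le_of_degree_le ?_ ?_
    · exact natDegree_mul_le.trans (by omega)
    · rcases Nat.eq_zero_or_pos n with rfl | hn
      · simp [WFPoly]
      · have hder := natDegree_derivative_le (WFPoly m n)
        exact natDegree_mul_le.trans (by omega)

lemma coeff_WFPoly_nonneg (m n k : ℕ) : 0 ≤ (WFPoly m n).coeff k := by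
  induction n generalizing k with
  | zero =>
    rw [WFPoly, coeff_one]
    split_ifs <;> simp
  | succ n ih =>
    have hder (j : ℕ) : 0 ≤ (derivative (WFPoly m n)).coeff j := by
      rw [coeff_derivative]
      exact mul_nonneg (ih _) (by positivity)
    rw [WFPoly, add_mul, add_mul, one_mul, mul_assoc, coeff_add, coeff_add, coeff_add, coeff_C_mul]
    have hshift (p : ℝ[X]) (hp : ∀ j, 0 ≤ p.coeff j) (j : ℕ) : 0 ≤ (X * p).coeff j := by
      cases j with
      | zero => simp
      | succ j => simpa using hp j
    have hsq := hshift _ (hshift _ hder) k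
    rw [← mul_assoc, ← sq] at hsq
    have := hshift _ ih k
    have := ih k
    have := hshift _ hder k
    positivity

lemma coeff_mul_pow_le_eval_WFPoly (m n k : ℕ) {x : ℝ} (hx : 0 ≤ x) :
    (WFPoly m n).coeff k * x ^ k ≤ (WFPoly m n).eval x := by
  rw [eval_eq_sum_range' (Nat.lt_succ_of_le ((natDegree_WFPoly_le m n).trans (le_max_left n k)))]
  exact Finset.single_le_sum (f := fun i => (WFPoly m n).coeff i * x ^ i)
    (fun i _ => mul_nonneg (coeff_WFPoly_nonneg m n i) (pow_nonneg hx i))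
    (Finset.mem_range.2 (Nat.lt_succ_of_le (le_max_right n k)))

lemma eval_one_WFPoly_le (m n k : ℕ)
    (hk : ∀ j ≤ n, (WFPoly m n).coeff j ≤ (WFPoly m n).coeff k) :
    (WFPoly m n).eval 1 ≤ (n + 1) * (WFPoly m n).coeff k := by
  rw [eval_eq_sum_range' (Nat.lt_succ_of_le (natDegree_WFPoly_le m n))]
  calc ∑ i ∈ Finset.range (n + 1), (WFPoly m n).coeff i * 1 ^ i
      ≤ ∑ _i ∈ Finset.range (n + 1), (WFPoly m n).coeff k :=
        Finset.sum_le_sum fun i hi => by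
          simpa using hk i (Nat.lt_succ_iff.1 (Finset.mem_range.1 hi))
    _ = (n + 1) * (WFPoly m n).coeff k := by simp

/-! ### The exponential generating function -/

open scoped PowerSeries in
/-- If `f' = f (1 + y)` and `y' = y² + m y`, then the `n`-th derivative of `f` is `f · F_m(n, y)`. -/
lemma iterate_derivative_eq_mul_aeval_WFPoly {m : ℕ} {f y : ℝ⟦X⟧}
    (hf : d⁄dX ℝ f = f * (1 + y)) (hy : d⁄dX ℝ y = y ^ 2 + (m : ℝ⟦X⟧) * y) (n : ℕ) :
    (d⁄dX ℝ)^[n] f = f * aeval y (WFPoly m n) := by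
  induction n with
  | zero => simp [WFPoly]
  | succ n ih =>
    rw [Function.iterate_succ_apply', ih, Derivation.leibniz, Derivation.map_aeval, hf, hy, WFPoly]
    simp only [smul_eq_mul, map_add, map_mul, map_pow, aeval_X, map_one, map_natCast]
    ring

open scoped PowerSeries in
/-- The recurrence for `F_m(n, x) / n!` obtained from the generating function
`e ^ z / (1 - (x / m) (e ^ (m z) - 1))`. -/
lemma eval_WFPoly_div_factorial (m : ℕ) (hm : 1 ≤ m) (x : ℝ) (n : ℕ) :
    (WFPoly m n).eval x / n.factorial = 1 / n.factorial +
      ∑ i ∈ Finset.range (n + 1), x / m * ((m : ℝ) ^ i / i.factorial - if i = 0 then 1 else 0) *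
        ((WFPoly m (n - i)).eval x / (n - i).factorial) := by
  have hm0 : (m : ℝ) ≠ 0 := by positivity
  set E : ℝ⟦X⟧ := PowerSeries.exp ℝ
  set B : ℝ⟦X⟧ := PowerSeries.C (x / m) * (E ^ m - 1) with hB
  have hB0 : PowerSeries.constantCoeff (1 - B) ≠ 0 := by simp [B, E]
  set I : ℝ⟦X⟧ := (1 - B)⁻¹
  have hI : (1 - B) * I = 1 := PowerSeries.mul_inv_cancel _ hB0
  have hI0 : PowerSeries.constantCoeff I = 1 := by simp [I, B, E]
  have hE : d⁄dX ℝ E = E := PowerSeries.derivative_exp ℝ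
  have hEm : d⁄dX ℝ (E ^ m) = (m : ℝ⟦X⟧) * E ^ m := by
    obtain ⟨k, rfl⟩ : ∃ k, m = k + 1 := ⟨m - 1, by omega⟩
    rw [PowerSeries.derivative_pow, hE, Nat.add_sub_cancel]
    ring
  have hCm : PowerSeries.C (x / m) * (m : ℝ⟦X⟧) = PowerSeries.C x := by
    rw [← map_natCast (PowerSeries.C (R := ℝ)), ← map_mul, div_mul_cancel₀ _ hm0]
  have hdB : d⁄dX ℝ B = PowerSeries.C x * E ^ m := by
    rw [hB, Derivation.leibniz, map_sub, hEm, PowerSeries.derivative_C, PowerSeries.derivative_one,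
      ← hCm]
    simp only [smul_eq_mul]
    ring
  have hdI : d⁄dX ℝ I = I * (PowerSeries.C x * E ^ m * I) := by
    rw [PowerSeries.derivative_inv', map_sub, hdB, PowerSeries.derivative_one]
    ring
  have hcoeff (k : ℕ) : PowerSeries.coeff k (E * I) = (WFPoly m k).eval x / k.factorial := by
    have hiter := iterate_derivative_eq_mul_aeval_WFPoly (m := m) (f := E * I)
      (y := PowerSeries.C x * E ^ m * I)
      (by
        rw [Derivation.leibniz, hdI, hE]
        simp only [smul_eq_mul]
        ring)
      (by
        rw [Derivation.leibniz, Derivation.leibniz, hdI, hEm, PowerSeries.derivative_C]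
        simp only [smul_eq_mul]
        ring) k
    have hconst := congrArg PowerSeries.constantCoeff hiter
    have hid : (PowerSeries.constantCoeff (R := ℝ)).comp (algebraMap ℝ ℝ⟦X⟧) = RingHom.id ℝ :=
      RingHom.ext fun r => by simp
    have hy0 : PowerSeries.constantCoeff (PowerSeries.C x * E ^ m * I) = x := by simp [E, hI0]
    have hf0 : PowerSeries.constantCoeff (E * I) = 1 := by simp [E, hI0]
    rw [PowerSeries.constantCoeff_iterate_derivative, map_mul PowerSeries.constantCoeff (E * I),
      aeval_def, hom_eval₂, hid, hy0, hf0, one_mul] at hconst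
    rw [eq_div_iff (by positivity), mul_comm, hconst]
    rfl
  have hfix : E * I = E + B * (E * I) := by linear_combination E * hI
  have hBcoeff (i : ℕ) : PowerSeries.coeff i B =
      x / m * ((m : ℝ) ^ i / i.factorial - if i = 0 then 1 else 0) := by
    rw [hB, PowerSeries.coeff_C_mul, map_sub, PowerSeries.exp_pow_eq_rescale_exp,
      PowerSeries.coeff_rescale, PowerSeries.coeff_exp, PowerSeries.coeff_one]
    simp [div_eq_mul_inv]
  rw [← hcoeff n, hfix, map_add, PowerSeries.coeff_mul,
    Finset.Nat.sum_antidiagonal_eq_sum_range_succ_mk]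
  congr 1
  · simp [E, PowerSeries.coeff_exp]
  · exact Finset.sum_congr rfl fun i _ => by rw [hBcoeff, hcoeff]

/-! ### Growth of solutions of renewal recurrences -/

lemma exists_le_mul_pow_of_renewal {b e f : ℕ → ℝ} {r S K : ℝ} (hr : 0 < r)
    (hb : ∀ i, 0 ≤ b i) (hb0 : b 0 = 0) (hS : HasSum (fun i => b i / r ^ i) S) (hS1 : S < 1)
    (hK : 0 < K) (he : ∀ n, e n ≤ K * r ^ n)
    (hf : ∀ n, f n = e n + ∑ i ∈ Finset.range (n + 1), b i * f (n - i)) :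
    ∃ A > 0, ∀ n, f n ≤ A * r ^ n := by
  have hS' : 0 < 1 - S := by linarith
  refine ⟨K / (1 - S), by positivity, fun n => ?_⟩
  set A := K / (1 - S) with hA
  have hA0 : 0 < A := by positivity
  induction n using Nat.strong_induction_on with
  | _ n ih =>
    have hterm : ∀ i ∈ Finset.range (n + 1), b i * f (n - i) ≤ A * r ^ n * (b i / r ^ i) := by
      intro i hi
      rcases Nat.eq_zero_or_pos i with rfl | hi0
      · simp [hb0]
      · have hin : i ≤ n := Nat.lt_succ_iff.1 (Finset.mem_range.1 hi)
        calc b i * f (n - i) ≤ b i * (A * r ^ (n - i)) :=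
              mul_le_mul_of_nonneg_left (ih _ (by omega)) (hb i)
          _ = A * r ^ n * (b i / r ^ i) := by
              rw [pow_sub₀ _ hr.ne' hin]
              ring
    have hsum : ∑ i ∈ Finset.range (n + 1), b i / r ^ i ≤ S :=
      sum_le_hasSum _ (fun i _ => div_nonneg (hb i) (by positivity)) hS
    have hKA : K = A * (1 - S) := by rw [hA]; field_simp
    calc f n = e n + ∑ i ∈ Finset.range (n + 1), b i * f (n - i) := hf n
      _ ≤ K * r ^ n + A * r ^ n * S := by
          refine add_le_add (he n) ((Finset.sum_le_sum hterm).trans ?_)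
          rw [← Finset.mul_sum]
          gcongr
      _ = A * r ^ n := by rw [hKA]; ring

lemma exists_mul_pow_le_of_renewal {b e f : ℕ → ℝ} {r S : ℝ} (hr : 0 < r)
    (hb : ∀ i, 0 ≤ b i) (hb0 : b 0 = 0) (hS : HasSum (fun i => b i / r ^ i) S) (hS1 : 1 < S)
    (he : ∀ n, 0 < e n) (hf0 : ∀ n, 0 ≤ f n)
    (hf : ∀ n, f n = e n + ∑ i ∈ Finset.range (n + 1), b i * f (n - i)) :
    ∃ a > 0, ∀ n, a * r ^ n ≤ f n := by
  obtain ⟨N, hN⟩ : ∃ N, 1 < ∑ i ∈ Finset.range N, b i / r ^ i :=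
    (hS.tendsto_sum_nat.eventually_const_lt hS1).exists
  have hNne : (Finset.range N).Nonempty := by
    rw [Finset.nonempty_range_iff]
    rintro rfl
    norm_num at hN
  obtain ⟨j, -, hj⟩ := Finset.exists_min_image (Finset.range N) (fun n => e n / r ^ n) hNne
  refine ⟨e j / r ^ j, div_pos (he j) (by positivity), fun n => ?_⟩
  set a := e j / r ^ j
  have ha : 0 < a := div_pos (he j) (by positivity)
  induction n using Nat.strong_induction_on with
  | _ n ih =>
    have hnn : ∀ i, 0 ≤ b i * f (n - i) := fun i => mul_nonneg (hb i) (hf0 _)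
    rcases lt_or_ge n N with hn | hn
    · have hmin := (le_div_iff₀ (by positivity)).1 (hj n (Finset.mem_range.2 hn))
      rw [hf n]
      exact hmin.trans (le_add_of_nonneg_right (Finset.sum_nonneg fun i _ => hnn i))
    · have hterm : ∀ i ∈ Finset.range N, a * r ^ n * (b i / r ^ i) ≤ b i * f (n - i) := by
        intro i hi
        rcases Nat.eq_zero_or_pos i with rfl | hi0
        · simp [hb0]
        · have hin : i ≤ n := (Finset.mem_range.1 hi).le.trans hn
          calc a * r ^ n * (b i / r ^ i) = b i * (a * r ^ (n - i)) := by
                rw [pow_sub₀ _ hr.ne' hin]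
                ring
            _ ≤ b i * f (n - i) := mul_le_mul_of_nonneg_left (ih _ (by omega)) (hb i)
      calc a * r ^ n ≤ a * r ^ n * ∑ i ∈ Finset.range N, b i / r ^ i :=
            le_mul_of_one_le_right (by positivity) hN.le
        _ ≤ ∑ i ∈ Finset.range N, b i * f (n - i) := by
            rw [Finset.mul_sum]
            exact Finset.sum_le_sum hterm
        _ ≤ ∑ i ∈ Finset.range (n + 1), b i * f (n - i) :=
            Finset.sum_le_sum_of_subset_of_nonneg
              (Finset.range_subset_range.2 (by omega)) fun i _ _ => hnn i
        _ ≤ f n := by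
            rw [hf n]
            exact le_add_of_nonneg_left (he n).le

/-! ### Exponential growth rate of `F_m(n, x)` -/

/-- The exponential growth rate of `F_m(n, exp t) / n!`, that is, `-log` of the smallest positive
pole `log (1 + m exp (-t)) / m` of its generating function. -/
noncomputable def whitneyRate (m : ℕ) (t : ℝ) : ℝ :=
  -Real.log (Real.log (1 + m * Real.exp (-t)) / m)

lemma hasSum_renewal_kernel (m : ℕ) (x r : ℝ) :
    HasSum (fun i : ℕ => x / m * ((m : ℝ) ^ i / i.factorial - if i = 0 then 1 else 0) / r ^ i)
      (x / m * (Real.exp (m / r) - 1)) := by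
  have hexp : HasSum (fun i : ℕ => ((m : ℝ) / r) ^ i / i.factorial) (Real.exp (m / r)) := by
    rw [Real.exp_eq_exp_ℝ]
    exact NormedSpace.expSeries_div_hasSum_exp (m / r : ℝ)
  refine ((hexp.sub (hasSum_ite_eq 0 (1 : ℝ))).mul_left (x / m)).congr_fun ?_
  intro i
  by_cases hi : i = 0
  · simp [hi]
  · simp [hi, div_pow]
    ring

lemma renewal_kernel_nonneg (m : ℕ) {x : ℝ} (hx : 0 ≤ x) (i : ℕ) :
    0 ≤ x / m * ((m : ℝ) ^ i / i.factorial - if i = 0 then 1 else 0) := by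
  by_cases hi : i = 0
  · simp [hi]
  · simp only [hi, if_false, sub_zero]
    positivity

lemma exp_neg_whitneyRate {m : ℕ} (hm : 1 ≤ m) (t : ℝ) :
    Real.exp (-whitneyRate m t) = Real.log (1 + m * Real.exp (-t)) / m := by
  have hm0 : (0 : ℝ) < m := by exact_mod_cast hm
  rw [whitneyRate, neg_neg, Real.exp_log]
  exact div_pos (Real.log_pos (by linarith [mul_pos hm0 (Real.exp_pos (-t))])) hm0

lemma exp_div_mul_exp_sub_one_whitneyRate {m : ℕ} (hm : 1 ≤ m) (t : ℝ) :
    Real.exp t / m * (Real.exp (m / Real.exp (whitneyRate m t)) - 1) = 1 := by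
  have hm0 : (0 : ℝ) < m := by exact_mod_cast hm
  rw [div_eq_mul_inv (m : ℝ) (Real.exp _), ← Real.exp_neg, exp_neg_whitneyRate hm,
    mul_div_cancel₀ _ hm0.ne', Real.exp_log (by positivity), Real.exp_neg]
  field_simp
  ring

lemma exists_eval_WFPoly_le {m : ℕ} (hm : 1 ≤ m) {t s : ℝ} (hs : whitneyRate m t < s) :
    ∃ A > 0, ∀ n : ℕ,
      (WFPoly m n).eval (Real.exp t) / n.factorial ≤ A * Real.exp s ^ n := by
  have hm0 : (0 : ℝ) < m := by exact_mod_cast hm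
  refine exists_le_mul_pow_of_renewal (Real.exp_pos s)
    (renewal_kernel_nonneg m (Real.exp_pos t).le) (by simp)
    (hasSum_renewal_kernel m (Real.exp t) (Real.exp s)) ?_
    (Real.exp_pos (1 / Real.exp s)) (fun n => ?_)
    (eval_WFPoly_div_factorial m hm (Real.exp t))
  · refine lt_of_lt_of_eq ?_ (exp_div_mul_exp_sub_one_whitneyRate hm t)
    gcongr
  · have hle := Real.pow_div_factorial_le_exp (x := 1 / Real.exp s) (by positivity) n
    rw [div_pow, one_pow, div_div, div_le_iff₀ (by positivity)] at hle
    rw [div_le_iff₀ (by positivity)]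
    linarith

lemma exists_le_eval_WFPoly {m : ℕ} (hm : 1 ≤ m) {t s : ℝ} (hs : s < whitneyRate m t) :
    ∃ a > 0, ∀ n : ℕ,
      a * Real.exp s ^ n ≤ (WFPoly m n).eval (Real.exp t) / n.factorial := by
  have hm0 : (0 : ℝ) < m := by exact_mod_cast hm
  refine exists_mul_pow_le_of_renewal (Real.exp_pos s)
    (renewal_kernel_nonneg m (Real.exp_pos t).le) (by simp)
    (hasSum_renewal_kernel m (Real.exp t) (Real.exp s)) ?_
    (fun n => by positivity) (fun n => ?_)
    (eval_WFPoly_div_factorial m hm (Real.exp t))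
  · refine lt_of_eq_of_lt (exp_div_mul_exp_sub_one_whitneyRate hm t).symm ?_
    gcongr
  · refine div_nonneg ?_ (by positivity)
    exact (mul_nonneg (coeff_WFPoly_nonneg m n 0) (by positivity)).trans
      (coeff_mul_pow_le_eval_WFPoly m n 0 (Real.exp_pos t).le)

lemma hasDerivAt_whitneyRate_zero {m : ℕ} (hm : 1 ≤ m) :
    HasDerivAt (whitneyRate m) (m / ((m + 1) * Real.log (m + 1))) 0 := by
  have hm0 : (0 : ℝ) < m := by exact_mod_cast hm
  have hlog : 0 < Real.log (1 + m) := Real.log_pos (by linarith)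
  have hinner : HasDerivAt (fun t : ℝ => 1 + m * Real.exp (-t)) (-m) 0 := by
    simpa using (((hasDerivAt_id (0 : ℝ)).neg.exp).const_mul (m : ℝ)).const_add 1
  have hpole := (hinner.log (by positivity)).div_const (m : ℝ)
  have hpole0 : Real.log (1 + m * Real.exp (-0)) / m ≠ 0 := by
    rw [neg_zero, Real.exp_zero, mul_one]
    positivity
  refine (hpole.log hpole0).neg.congr_deriv ?_
  rw [neg_zero, Real.exp_zero, mul_one, add_comm (m : ℝ) 1]
  field_simp

/-! ### The mode -/

/-- Chernoff bound for the position of a maximal coefficient. -/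
lemma eventually_mode_mul_le {m : ℕ} (hm : 1 ≤ m) {W : ℕ → ℕ}
    (hmax : ∀ n, ∀ k ≤ n, (WFPoly m n).coeff k ≤ (WFPoly m n).coeff (W n))
    (t : ℝ) {ε : ℝ} (hε : 0 < ε) :
    ∀ᶠ n : ℕ in Filter.atTop,
      (W n : ℝ) / n * t ≤ whitneyRate m t - whitneyRate m 0 + ε := by
  obtain ⟨A, hA, hupper⟩ := exists_eval_WFPoly_le hm (t := t)
    (s := whitneyRate m t + ε / 4) (by linarith)
  obtain ⟨a, ha, hlower⟩ := exists_le_eval_WFPoly hm (t := 0)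
    (s := whitneyRate m 0 - ε / 4) (by linarith)
  have hlog : Filter.Tendsto (fun n : ℕ => Real.log ((n : ℝ) + 1) / n) Filter.atTop (nhds 0) := by
    simpa [Function.comp_def] using
      (Real.tendsto_pow_log_div_mul_add_atTop 1 (-1) 1 one_ne_zero).comp
      (Filter.tendsto_atTop_add_const_right _ (1 : ℝ) tendsto_natCast_atTop_atTop)
  have hconst : Filter.Tendsto (fun n : ℕ => Real.log (A / a) / n) Filter.atTop (nhds 0) :=
    tendsto_const_div_atTop_nhds_zero_nat _
  filter_upwards [hlog.eventually_lt_const (show 0 < ε / 4 by linarith),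
    hconst.eventually_lt_const (show 0 < ε / 4 by linarith), Filter.eventually_gt_atTop 0]
    with n hn₁ hn₂ hn
  have hn0 : (0 : ℝ) < n := by exact_mod_cast hn
  have hfac : (0 : ℝ) < n.factorial := by positivity
  set u := whitneyRate m t + ε / 4
  set v := whitneyRate m 0 - ε / 4
  have hchain : a * Real.exp v ^ n * Real.exp t ^ W n ≤ (n + 1) * (A * Real.exp u ^ n) := by
    have hlow := hlower n
    rw [Real.exp_zero] at hlow
    calc a * Real.exp v ^ n * Real.exp t ^ W n
        ≤ (WFPoly m n).eval 1 / n.factorial * Real.exp t ^ W n := by gcongr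
      _ ≤ ((n + 1) * (WFPoly m n).coeff (W n)) / n.factorial * Real.exp t ^ W n := by
          gcongr
          exact eval_one_WFPoly_le m n (W n) (hmax n)
      _ = (n + 1) * ((WFPoly m n).coeff (W n) * Real.exp t ^ W n / n.factorial) := by ring
      _ ≤ (n + 1) * ((WFPoly m n).eval (Real.exp t) / n.factorial) := by
          gcongr
          exact coeff_mul_pow_le_eval_WFPoly m n (W n) (Real.exp_pos t).le
      _ ≤ (n + 1) * (A * Real.exp u ^ n) := by
          gcongr
          exact hupper n
  have hlogs := Real.log_le_log (by positivity) hchain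
  rw [Real.log_mul (by positivity) (by positivity), Real.log_mul (by positivity) (by positivity),
    Real.log_mul (by positivity) (by positivity), Real.log_mul (by positivity) (by positivity),
    Real.log_pow, Real.log_pow, Real.log_pow, Real.log_exp, Real.log_exp, Real.log_exp] at hlogs
  rw [Real.log_div hA.ne' ha.ne', div_lt_iff₀ hn0] at hn₂
  rw [div_lt_iff₀ hn0] at hn₁
  rw [div_mul_eq_mul_div, div_le_iff₀ hn0]
  simp only [u, v] at hlogs
  linarith

lemma tendsto_mode_div_s14 {m : ℕ} (hm : 1 ≤ m) {W : ℕ → ℕ}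
    (hmax : ∀ n, ∀ k ≤ n, (WFPoly m n).coeff k ≤ (WFPoly m n).coeff (W n)) :
    Filter.Tendsto (fun n : ℕ => (W n : ℝ) / n) Filter.atTop
      (nhds (m / ((m + 1) * Real.log (m + 1)))) := by
  have hslope := (hasDerivAt_whitneyRate_zero hm).tendsto_slope_zero
  simp only [zero_add, smul_eq_mul] at hslope
  rw [tendsto_order]
  constructor
  · intro c hc
    have hleft := (hslope.mono_left (nhdsWithin_mono 0
      (show Set.Iio (0 : ℝ) ⊆ {0}ᶜ from fun t ht => ht.ne))).eventually_const_lt hc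
    obtain ⟨t, hct, ht⟩ := (hleft.and self_mem_nhdsWithin).exists
    have ht : t < 0 := ht
    have hgap : whitneyRate m t - whitneyRate m 0 < c * t := by
      rwa [inv_mul_eq_div, lt_div_iff_of_neg ht] at hct
    filter_upwards [eventually_mode_mul_le hm hmax t
      (show 0 < (c * t - (whitneyRate m t - whitneyRate m 0)) / 2 by linarith)] with n hn
    exact lt_of_mul_lt_mul_of_nonpos_right (by linarith) ht.le
  · intro c hc
    have hright := (hslope.mono_left (nhdsWithin_mono 0
      (show Set.Ioi (0 : ℝ) ⊆ {0}ᶜ from fun t ht => ht.ne'))).eventually_lt_const hc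
    obtain ⟨t, hct, ht⟩ := (hright.and self_mem_nhdsWithin).exists
    have ht : 0 < t := ht
    have hgap : whitneyRate m t - whitneyRate m 0 < c * t := by
      rwa [inv_mul_eq_div, div_lt_iff₀ ht] at hct
    filter_upwards [eventually_mode_mul_le hm hmax t
      (show 0 < (c * t - (whitneyRate m t - whitneyRate m 0)) / 2 by linarith)] with n hn
    exact lt_of_mul_lt_mul_right (by linarith) ht.le

/-- For fixed `m ≥ 1`, the smallest index `W n` in `{0, …, n}` maximizing the `k`-th
coefficient `k!·W_m(n,k)` of the Whitney–Fubini polynomial `F_m(n,x)` satisfies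
`W n ∼ m·n/((m+1)·log(m+1))` as `n → ∞`. -/
theorem mode_whitney_asymptotic
    (m : ℕ) (hm : 1 ≤ m) (W : ℕ → ℕ)
    (hmem : ∀ n, W n ≤ n)
    (hmax : ∀ n, ∀ k ≤ n, (WFPoly m n).coeff k ≤ (WFPoly m n).coeff (W n))
    (hmin : ∀ n, ∀ k ≤ n,
      (∀ j ≤ n, (WFPoly m n).coeff j ≤ (WFPoly m n).coeff k) → W n ≤ k) :
    Filter.Tendsto
      (fun n : ℕ => (W n : ℝ) / ((m : ℝ) * (n : ℝ) / (((m : ℝ) + 1) * Real.log ((m : ℝ) + 1))))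
      Filter.atTop (nhds 1) := by
  have hm0 : (0 : ℝ) < m := by exact_mod_cast hm
  have hlog : 0 < Real.log ((m : ℝ) + 1) := Real.log_pos (by linarith)
  have hc : (m : ℝ) / ((m + 1) * Real.log (m + 1)) ≠ 0 := by positivity
  have hdiv := (tendsto_mode_div_s14 hm hmax).div_const ((m : ℝ) / ((m + 1) * Real.log (m + 1)))
  rw [div_self hc] at hdiv
  refine hdiv.congr fun n => ?_
  rw [div_div, mul_comm (n : ℝ), div_mul_eq_mul_div]
end
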